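/- Under hypothesis (1.0), assume μ(0,D) < ∞. Then the DN principal eigenvalue λ₀ equals λ̃₀ (the infimum of D(f)/μ(f²) over f with f(0) = 0, f = f(·∧x₀), f ∈ C¹(0,x₀) ∩ C[0,x₀] for some x₀ ∈ (0,D)) and the following variational formulas hold: (1) inf over f ∈ F̃_I of sup_{x∈(0,D)} I(f)(x)^{-1} = λ₀ = sup over f ∈ F_I of inf_{x∈(0,D)} I(f)(x)^{-1}; (2) λ₀ equals each of inf over f ∈ F̃_I, over f ∈ F̃_II, and over f ∈ F̃_II ∪ F̃_II' of sup_{x∈(0,D)} II(f)(x)^{-1}, and λ₀ equals each of sup over f ∈ F_I and over f ∈ F_II of inf_{x∈(0,D)} II(f)(x)^{-1}. -/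

import Mathlib

/-! The proof works with the positive operator
`K g(x) = ∫_{(0,x)} ν(ds) ∫_{(s,D)} g dμ`, so that `II(f) = K f / f` and
`(K g)' = e^{-C} ∫_{(·,D)} g dμ`. Everything is `ℝ≥0∞`-valued, and Tonelli gives the energy identity
`D(K g) = ∫ g · K g dμ` (`energy`).

*Lower bounds.* If `c · K f ≤ f` with `f > 0`, then Cauchy–Schwarz with the weight
`∫_{(s,D)} f dμ` yields the Hardy inequality `c μ(g²) ≤ D(g)` for every test function `g`
(`hardy`). Hence `sup_{F_II} inf II⁻¹` is at most both `λ₀` and `λ̃₀`. On `F_I`, integrating the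
bound for `I` gives the bound for `II`.

*Attaining the supremum.* Let `Λ` be `λ₀` or `λ̃₀` and let `c < Λ`. The Picard iterates of
`s = K(1 + c s)`, with sources truncated away from `D`, are admissible test functions. Comparing the
inequality `Λ μ(f²) ≤ D(f)` with the energy identity, and using `μ(0,D) < ∞`, bounds them uniformly
in `L²(μ)`, hence in `L¹(μ)` (`lintegral_iSup_iter_ne_top`). Their increasing limit `s` is therefore
a finite solution lying in `F_I`, and `s' = e^{-C} ∫_{(·,D)} (1 + c s) dμ` shows `I(s)⁻¹ ≥ c`
(`le_iSup_FI`). Applied to both values of `Λ` this also proves `λ₀ = λ̃₀`.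

*Upper bounds.* For `f` in `F̃_II` or `F̃_II'`, with `c = sup II(f)⁻¹ < ∞`, the function `K f`
(frozen beyond `x₀` in the first case) is a test function, and `f ≤ c K f` turns the energy identity
into `D(K f) ≤ c μ((K f)²)` (`lam0tilDN_le_FIItil`, `lam0DN_le_FIItil'`).

*Attaining the infimum.* If `c > λ̃₀`, some `x₀` carries a test function with quotient below `c`, so
no finite supersolution exists for the problem frozen beyond `x₀`, and its Picard iterates blow up
at `x₀`. A late iterate dominates the constant `1`, lies in `F̃_I`, and has `sup I⁻¹` arbitrarily
close to `c` (`iInf_FItil_opI_le`). -/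


open MeasureTheory Set Filter Topology ENNReal

noncomputable section

/-- The open interval `(0, D)` in `ℝ`, where `D : ℝ≥0∞` may be infinite. -/
def ooI (D : ℝ≥0∞) : Set ℝ := {x : ℝ | 0 < x ∧ ENNReal.ofReal x < D}

/-- The interval `[0, D)` in `ℝ`. -/
def coI (D : ℝ≥0∞) : Set ℝ := {x : ℝ | 0 ≤ x ∧ ENNReal.ofReal x < D}

/-- The interval `[0, D]` in `ℝ` (conventionally `[0, ∞)` when `D = ∞`). -/
def ccI (D : ℝ≥0∞) : Set ℝ := {x : ℝ | 0 ≤ x ∧ ENNReal.ofReal x ≤ D}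

/-- `C(x) = ∫_0^x b(u)/a(u) du`. -/
def Cf (a b : ℝ → ℝ) (x : ℝ) : ℝ := ∫ u in Set.Ioo 0 x, b u / a u

/-- The measure `μ(dx) = (e^{C(x)}/a(x)) dx` on `(0, D)`. -/
def muM (a b : ℝ → ℝ) (D : ℝ≥0∞) : Measure ℝ :=
  (volume.restrict (ooI D)).withDensity fun x => ENNReal.ofReal (Real.exp (Cf a b x) / a x)

/-- The measure `ν(dx) = e^{-C(x)} dx` on `(0, D)`. -/
def nuM (a b : ℝ → ℝ) (D : ℝ≥0∞) : Measure ℝ :=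
  (volume.restrict (ooI D)).withDensity fun x => ENNReal.ofReal (Real.exp (-Cf a b x))

/-- Hypothesis (1.0): `a`, `b` Borel measurable, `a > 0` on `(0,D)`, and `b/a`, `e^C/a`
locally integrable on `[0, D]`. -/
def Hyp (a b : ℝ → ℝ) (D : ℝ≥0∞) : Prop :=
  Measurable a ∧ Measurable b ∧ (∀ x ∈ ooI D, 0 < a x) ∧
    ∀ p : ℝ, 0 ≤ p → ENNReal.ofReal p ≤ D →
      IntegrableOn (fun u => b u / a u) (Set.Icc 0 p) ∧
      IntegrableOn (fun u => Real.exp (Cf a b u) / a u) (Set.Icc 0 p)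

/-- `f ∈ C¹(0,D) ∩ C[0,D]`. -/
def C1C (D : ℝ≥0∞) (f : ℝ → ℝ) : Prop :=
  ContinuousOn f (ccI D) ∧ (∀ x ∈ ooI D, DifferentiableAt ℝ f x) ∧
    ContinuousOn (deriv f) (ooI D)

/-- The Dirichlet form `D(f) = ∫_0^D e^{C} f'^2 dx`. -/
def Dform (a b : ℝ → ℝ) (D : ℝ≥0∞) (f : ℝ → ℝ) : ℝ≥0∞ :=
  ∫⁻ x in ooI D, ENNReal.ofReal (Real.exp (Cf a b x) * deriv f x ^ 2)

/-- `μ(f²)`. -/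
def muL2 (a b : ℝ → ℝ) (D : ℝ≥0∞) (f : ℝ → ℝ) : ℝ≥0∞ :=
  ∫⁻ x, ENNReal.ofReal (f x ^ 2) ∂(muM a b D)

/-- The ND (Neumann at `0`, Dirichlet at `D`) principal eigenvalue `λ₀`, defined with
compactly supported test functions. -/
def lam0 (a b : ℝ → ℝ) (D : ℝ≥0∞) : ℝ≥0∞ :=
  sInf {r | ∃ f : ℝ → ℝ, C1C D f ∧
    (∃ p : ℝ, 0 ≤ p ∧ ENNReal.ofReal p < D ∧ ∀ x, p < x → f x = 0) ∧
    (D ≠ ∞ → f D.toReal = 0) ∧ muL2 a b D f = 1 ∧ r = Dform a b D f}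

/-- The DN (Dirichlet at `0`, Neumann at `D`) principal eigenvalue:
`λ₀ = inf { D(f)/μ(f²) : f ∈ C¹(0,D) ∩ C[0,D], D(f) < ∞, f(0) = 0, f ≠ 0 }`. -/
def lam0DN (a b : ℝ → ℝ) (D : ℝ≥0∞) : ℝ≥0∞ :=
  sInf {r | ∃ f : ℝ → ℝ, C1C D f ∧ Dform a b D f ≠ ∞ ∧ f 0 = 0 ∧
    (¬∀ x ∈ ccI D, f x = 0) ∧ r = Dform a b D f / muL2 a b D f}

/-- The DN single-integral operator `I(f)(x) = (e^{-C(x)}/f'(x)) ∫_x^D f dμ`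
(valued in `ℝ≥0∞`, with the convention `1/0 = ∞`). -/
def opIdn (a b : ℝ → ℝ) (D : ℝ≥0∞) (f : ℝ → ℝ) (x : ℝ) : ℝ≥0∞ :=
  ENNReal.ofReal (Real.exp (-Cf a b x)) *
      (∫⁻ u in Set.Ioi x, ENNReal.ofReal (f u) ∂(muM a b D)) /
    ENNReal.ofReal (deriv f x)

/-- The DN double-integral operator
`II(f)(x) = (1/f(x)) ∫_0^x ν(ds) ∫_s^D f dμ`. -/
def opIIdn (a b : ℝ → ℝ) (D : ℝ≥0∞) (f : ℝ → ℝ) (x : ℝ) : ℝ≥0∞ :=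
  (∫⁻ s in Set.Ioo 0 x,
      (∫⁻ u in Set.Ioi s, ENNReal.ofReal (f u) ∂(muM a b D)) ∂(nuM a b D)) /
    ENNReal.ofReal (f x)

/-- `λ̃₀`: the infimum of `D(f)/μ(f²)` over nonzero `f` with `f(0) = 0`,
`f = f(·∧x₀)` and `f ∈ C¹(0,x₀) ∩ C[0,x₀]` for some `x₀ ∈ (0,D)`. -/
def lam0tilDN (a b : ℝ → ℝ) (D : ℝ≥0∞) : ℝ≥0∞ :=
  sInf {r | ∃ f : ℝ → ℝ, ∃ x₀ : ℝ, 0 < x₀ ∧ ENNReal.ofReal x₀ < D ∧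
    f 0 = 0 ∧ (∀ x : ℝ, f x = f (min x x₀)) ∧ ContinuousOn f (Set.Icc 0 x₀) ∧
    (∀ x ∈ Set.Ioo 0 x₀, DifferentiableAt ℝ f x) ∧
    ContinuousOn (deriv f) (Set.Ioo 0 x₀) ∧
    (¬∀ x ∈ ccI D, f x = 0) ∧ r = Dform a b D f / muL2 a b D f}

/-- The DN class `F_I`. -/
def FIdn (D : ℝ≥0∞) : Set (ℝ → ℝ) :=
  {f | C1C D f ∧ f 0 = 0 ∧ ∀ x ∈ ooI D, 0 < deriv f x}

/-- The DN class `F_II`. -/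
def FIIdn (D : ℝ≥0∞) : Set (ℝ → ℝ) :=
  {f | ContinuousOn f (ccI D) ∧ f 0 = 0 ∧ ∀ x ∈ ooI D, 0 < f x}

/-- The DN modified class `F̃_I`. -/
def FItildn (D : ℝ≥0∞) : Set (ℝ → ℝ) :=
  {f | ∃ x₀ : ℝ, 0 < x₀ ∧ ENNReal.ofReal x₀ < D ∧ ContinuousOn f (ccI D) ∧
    f 0 = 0 ∧ (∀ x : ℝ, f x = f (min x x₀)) ∧
    (∀ x ∈ Set.Ioo 0 x₀, DifferentiableAt ℝ f x) ∧
    ContinuousOn (deriv f) (Set.Ioo 0 x₀) ∧ ∀ x ∈ Set.Ioo 0 x₀, 0 < deriv f x}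

/-- The DN modified class `F̃_II`. -/
def FIItildn (D : ℝ≥0∞) : Set (ℝ → ℝ) :=
  {f | ∃ x₀ : ℝ, 0 < x₀ ∧ ENNReal.ofReal x₀ < D ∧ ContinuousOn f (Set.Icc 0 x₀) ∧
    f 0 = 0 ∧ (∀ x : ℝ, f x = f (min x x₀)) ∧ ∀ x ∈ Set.Ioo 0 x₀, 0 < f x}

/-- The DN class `F̃_II' = {f ∈ C[0,D] : f > 0 and f · II(f) ∈ L²(μ)}`. -/
def FIItildn' (a b : ℝ → ℝ) (D : ℝ≥0∞) : Set (ℝ → ℝ) :=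
  {f | ContinuousOn f (ccI D) ∧ (∀ x ∈ ccI D, 0 < f x) ∧
    (∫⁻ x, (ENNReal.ofReal (f x) * opIIdn a b D f x) ^ 2 ∂(muM a b D)) ≠ ∞}

/-! ### The operator K, the Hardy inequality and Picard iterates -/

/-- The tail `s ↦ ∫_{(s,∞)} g dμ`. -/
def tailI (μ : Measure ℝ) (g : ℝ → ℝ≥0∞) (s : ℝ) : ℝ≥0∞ := ∫⁻ u in Ioi s, g u ∂μ

/-- The positive integral operator `K g(x) = ∫_{(0,x)} ν(ds) ∫_{(s,∞)} g dμ`, so that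
`II(f) = K f / f`. -/
def kap (μ ν : Measure ℝ) (g : ℝ → ℝ≥0∞) (x : ℝ) : ℝ≥0∞ := ∫⁻ s in Ioo 0 x, tailI μ g s ∂ν

section Abstract

variable {μ ν : Measure ℝ} {g g' q : ℝ → ℝ≥0∞}

lemma tailI_antitone : Antitone (tailI μ g) := fun _ _ h =>
  lintegral_mono_set (Ioi_subset_Ioi h)

lemma measurable_tailI : Measurable (tailI μ g) := tailI_antitone.measurable

lemma kap_monotone : Monotone (kap μ ν g) := fun _ _ h =>
  lintegral_mono_set (Ioo_subset_Ioo_right h)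

lemma measurable_kap : Measurable (kap μ ν g) := kap_monotone.measurable

lemma tailI_mono (h : ∀ᵐ u ∂μ, g u ≤ g' u) (s : ℝ) : tailI μ g s ≤ tailI μ g' s :=
  lintegral_mono_ae (ae_restrict_of_ae h)

lemma kap_mono (h : ∀ᵐ u ∂μ, g u ≤ g' u) (x : ℝ) : kap μ ν g x ≤ kap μ ν g' x :=
  lintegral_mono fun s => tailI_mono h s

lemma tailI_congr (h : ∀ᵐ u ∂μ, g u = g' u) : tailI μ g = tailI μ g' :=
  funext fun _ => lintegral_congr_ae (ae_restrict_of_ae h)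

lemma kap_congr (h : ∀ᵐ u ∂μ, g u = g' u) : kap μ ν g = kap μ ν g' := by
  unfold kap; rw [tailI_congr h]

lemma kap_zero : kap μ ν g 0 = 0 := by simp [kap]

lemma tailI_const_mul {c : ℝ≥0∞} (hc : c ≠ ∞) (s : ℝ) :
    tailI μ (fun u => c * g u) s = c * tailI μ g s :=
  lintegral_const_mul' _ _ hc

lemma kap_const_mul {c : ℝ≥0∞} (hc : c ≠ ∞) (x : ℝ) :
    kap μ ν (fun u => c * g u) x = c * kap μ ν g x := by
  unfold kap
  simp_rw [tailI_const_mul hc]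
  exact lintegral_const_mul' _ _ hc

/-- Tonelli for the kernel `1_{0 < s < x}`. -/
lemma lintegral_mul_primitive [SFinite μ] [SFinite ν] (hg : Measurable g) (hq : Measurable q)
    (hν : ∀ᵐ s ∂ν, 0 < s) :
    ∫⁻ x, g x * (∫⁻ s in Ioo 0 x, q s ∂ν) ∂μ = ∫⁻ s, q s * tailI μ g s ∂ν := by
  have h1 : ∀ x, g x * (∫⁻ s in Ioo 0 x, q s ∂ν)
      = ∫⁻ s, {z : ℝ × ℝ | 0 < z.2 ∧ z.2 < z.1}.indicator (fun z => g z.1 * q z.2) (x, s) ∂ν := by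
    intro x
    rw [← lintegral_const_mul _ hq, ← lintegral_indicator measurableSet_Ioo]
    refine lintegral_congr fun s => ?_
    simp [indicator, mem_Ioo]
  have hm : Measurable ({z : ℝ × ℝ | 0 < z.2 ∧ z.2 < z.1}.indicator
      (fun z : ℝ × ℝ => g z.1 * q z.2)) := by
    refine Measurable.indicator (by fun_prop) ?_
    exact (measurableSet_lt measurable_const measurable_snd).inter
      (measurableSet_lt measurable_snd measurable_fst)
  simp_rw [h1]
  rw [lintegral_lintegral_swap (f := fun x s =>
    {z : ℝ × ℝ | 0 < z.2 ∧ z.2 < z.1}.indicator (fun z => g z.1 * q z.2) (x, s)) hm.aemeasurable]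
  refine lintegral_congr_ae ?_
  filter_upwards [hν] with s hs
  unfold tailI
  rw [← lintegral_const_mul _ hg, ← lintegral_indicator measurableSet_Ioi]
  refine lintegral_congr fun x => ?_
  simp [indicator, hs, mul_comm]

/-- The energy identity `∫ (e^C (K g)')² dν = ∫ g · K g dμ`. -/
lemma energy [SFinite μ] [SFinite ν] (hg : Measurable g) (hν : ∀ᵐ s ∂ν, 0 < s) :
    ∫⁻ s, tailI μ g s ^ 2 ∂ν = ∫⁻ x, g x * kap μ ν g x ∂μ := by
  unfold kap
  rw [lintegral_mul_primitive hg measurable_tailI hν]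
  simp_rw [sq]

lemma cauchy_schwarz {f h : ℝ → ℝ≥0∞} (hf : AEMeasurable f μ) (hh : AEMeasurable h μ) :
    (∫⁻ x, f x * h x ∂μ) ^ 2 ≤ (∫⁻ x, f x ^ 2 ∂μ) * ∫⁻ x, h x ^ 2 ∂μ := by
  have h0 := ENNReal.lintegral_mul_le_Lp_mul_Lq μ (p := 2) (q := 2)
    (Real.holderConjugate_iff.2 ⟨by norm_num, by norm_num⟩) hf hh
  have h1 := pow_le_pow_left' h0 2
  refine h1.trans (le_of_eq ?_)
  rw [mul_pow, ← ENNReal.rpow_natCast, ← ENNReal.rpow_natCast, ← ENNReal.rpow_mul,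
    ← ENNReal.rpow_mul]
  norm_num

/-- Weighted Hardy inequality: a positive supersolution `c · K f ≤ f` forces
`c ∫ (∫_{(0,x)} q dν)² dμ ≤ ∫ q² dν`. -/
lemma hardy [SFinite μ] [SFinite ν] {f : ℝ → ℝ≥0∞} {c : ℝ≥0∞} (hfm : Measurable f)
    (hq : Measurable q) (hν : ∀ᵐ s ∂ν, 0 < s) (hH : ∀ᵐ s ∂ν, tailI μ f s ≠ 0 ∧ tailI μ f s ≠ ∞)
    (hf : ∀ᵐ x ∂μ, c * kap μ ν f x ≤ f x) :
    c * ∫⁻ x, (∫⁻ s in Ioo 0 x, q s ∂ν) ^ 2 ∂μ ≤ ∫⁻ s, q s ^ 2 ∂ν := by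
  set H := tailI μ f with hHdef
  have hHm : Measurable H := measurable_tailI
  -- split `q = (q H^{-1/2}) H^{1/2}`
  have key : ∀ x, (∫⁻ s in Ioo 0 x, q s ∂ν) ^ 2
      ≤ (∫⁻ s in Ioo 0 x, q s ^ 2 * (H s)⁻¹ ∂ν) * kap μ ν f x := by
    intro x
    have h1 : ∫⁻ s in Ioo 0 x, q s ∂ν
        = ∫⁻ s in Ioo 0 x, (q s * (H s)⁻¹ ^ (1/2 : ℝ)) * (H s) ^ (1/2 : ℝ) ∂ν := by
      refine lintegral_congr_ae (ae_restrict_of_ae ?_)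
      filter_upwards [hH] with s hs
      rw [mul_assoc, ← ENNReal.mul_rpow_of_nonneg _ _ (by norm_num),
        ENNReal.inv_mul_cancel hs.1 hs.2, ENNReal.one_rpow, mul_one]
    have hsq : ∀ y : ℝ≥0∞, (y ^ (1/2 : ℝ)) ^ 2 = y := by
      intro y
      rw [← ENNReal.rpow_natCast, ← ENNReal.rpow_mul]; norm_num
    rw [h1]
    refine (cauchy_schwarz (by fun_prop) (by fun_prop)).trans (le_of_eq ?_)
    simp_rw [mul_pow, hsq]
    rfl
  have hqm : Measurable fun s => q s ^ 2 * (H s)⁻¹ := by fun_prop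
  have hprim : Monotone fun x => ∫⁻ s in Ioo 0 x, q s ∂ν := fun _ _ h =>
    lintegral_mono_set (Ioo_subset_Ioo_right h)
  calc c * ∫⁻ x, (∫⁻ s in Ioo 0 x, q s ∂ν) ^ 2 ∂μ
      = ∫⁻ x, c * (∫⁻ s in Ioo 0 x, q s ∂ν) ^ 2 ∂μ := by
        rw [lintegral_const_mul]
        exact hprim.measurable.pow_const 2
    _ ≤ ∫⁻ x, f x * (∫⁻ s in Ioo 0 x, q s ^ 2 * (H s)⁻¹ ∂ν) ∂μ := by
        refine lintegral_mono_ae ?_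
        filter_upwards [hf] with x hx
        calc c * (∫⁻ s in Ioo 0 x, q s ∂ν) ^ 2
            ≤ c * ((∫⁻ s in Ioo 0 x, q s ^ 2 * (H s)⁻¹ ∂ν) * kap μ ν f x) := by
              gcongr; exact key x
          _ = (c * kap μ ν f x) * (∫⁻ s in Ioo 0 x, q s ^ 2 * (H s)⁻¹ ∂ν) := by ring
          _ ≤ _ := by gcongr
    _ = ∫⁻ s, q s ^ 2 * (H s)⁻¹ * H s ∂ν := lintegral_mul_primitive hfm hqm hν
    _ = ∫⁻ s, q s ^ 2 ∂ν := by
        refine lintegral_congr_ae ?_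
        filter_upwards [hH] with s hs
        rw [mul_assoc, ENNReal.inv_mul_cancel hs.1 hs.2, mul_one]

/-- Truncated Picard iterates for the equation `f = K(1 + c f)`:
`f₀ = 0`, `f_{n+1} = K(1_{E n} (1 + c f_n))`. -/
def iter (μ ν : Measure ℝ) (c : ℝ≥0∞) (E : ℕ → Set ℝ) : ℕ → ℝ → ℝ≥0∞
  | 0 => 0
  | n + 1 => kap μ ν ((E n).indicator fun u => 1 + c * iter μ ν c E n u)

variable {c : ℝ≥0∞} {E : ℕ → Set ℝ}

lemma iter_monotone (n : ℕ) : Monotone (iter μ ν c E n) := by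
  cases n with
  | zero => exact monotone_const
  | succ n => exact kap_monotone

lemma measurable_iter (n : ℕ) : Measurable (iter μ ν c E n) := (iter_monotone n).measurable

lemma iter_le_succ (hE : Monotone E) (n : ℕ) : ∀ x, iter μ ν c E n x ≤ iter μ ν c E (n + 1) x := by
  induction n with
  | zero => intro x; simp [iter]
  | succ n ih =>
    intro x
    rw [iter, iter]
    refine kap_mono (Eventually.of_forall fun u => ?_) x
    refine (indicator_le_indicator_of_subset (hE n.le_succ) (fun _ => zero_le) u).trans ?_
    exact indicator_le_indicator (by gcongr; exact ih u)

lemma iter_mono_nat (hE : Monotone E) (x : ℝ) : Monotone fun n => iter μ ν c E n x :=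
  monotone_nat_of_le_succ fun n => iter_le_succ hE n x

/-- The increasing limit of the iterates solves `f = K(1 + c f)`. -/
lemma iSup_iter (hE : Monotone E) (hEm : ∀ n, MeasurableSet (E n))
    (hEU : ∀ᵐ u ∂μ, ∃ n, u ∈ E n) (x : ℝ) :
    ⨆ n, iter μ ν c E n x = kap μ ν (fun u => 1 + c * ⨆ n, iter μ ν c E n u) x := by
  have hmono : ∀ u, Monotone fun n => (E n).indicator (fun u => 1 + c * iter μ ν c E n u) u := by
    intro u m n hmn
    refine (indicator_le_indicator_of_subset (hE hmn) (fun _ => zero_le) u).trans ?_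
    exact indicator_le_indicator (by gcongr; exact iter_mono_nat hE u hmn)
  have hmeas : ∀ n, Measurable ((E n).indicator (fun u => 1 + c * iter μ ν c E n u)) := fun n =>
    (((measurable_iter n).const_mul c).const_add 1).indicator (hEm n)
  have h1 : ⨆ n, iter μ ν c E n x = ⨆ n, iter μ ν c E (n + 1) x := by
    rw [← sup_iSup_nat_succ]; simp [iter]
  have h2 : ∀ᵐ u ∂μ, (1 + c * ⨆ n, iter μ ν c E n u)
      = ⨆ n, (E n).indicator (fun u => 1 + c * iter μ ν c E n u) u := by
    filter_upwards [hEU] with u ⟨N, hN⟩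
    apply le_antisymm
    · rw [ENNReal.mul_iSup, ENNReal.add_iSup]
      refine iSup_le fun n => ?_
      refine le_iSup_of_le (max n N) ?_
      rw [indicator_of_mem (hE (le_max_right n N) hN)]
      gcongr
      exact iter_mono_nat hE u (le_max_left n N)
    · refine iSup_le fun n => ?_
      refine (indicator_le_self _ _ u).trans ?_
      gcongr
      exact le_iSup (fun n => iter μ ν c E n u) n
  rw [h1, kap_congr h2]
  unfold kap tailI
  simp_rw [lintegral_iSup hmeas (fun m n hmn u => hmono u hmn)]
  exact (lintegral_iSup (fun n => measurable_tailI)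
    (fun m n hmn s => tailI_mono (Eventually.of_forall fun u => hmono u hmn) s)).symm

/-- Young-type bound absorbing a linear term into a small multiple of its square. -/
lemma le_mul_sq_add_inv {t : ℝ≥0∞} (ht : t ≠ 0) (ht' : t ≠ ∞) (y : ℝ≥0∞) :
    y ≤ t * y ^ 2 + t⁻¹ := by
  rcases le_total y t⁻¹ with h | h
  · exact h.trans le_add_self
  · refine le_trans ?_ le_self_add
    calc y = t * t⁻¹ * y := by rw [ENNReal.mul_inv_cancel ht ht', one_mul]
      _ ≤ t * y * y := by gcongr
      _ = t * y ^ 2 := by ring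

end Abstract

/-! ### Integrability of the limit, the interval and the measures -/

section Abstract2

variable {μ ν : Measure ℝ} {c : ℝ≥0∞} {E : ℕ → Set ℝ}

/-- Uniform `L¹` bound for the iterates when `c` is strictly below a constant `Λ` of the
Poincaré inequality `Λ ∫ (K g)² dμ ≤ ∫ (e^C (K g)')² dν`. -/
lemma lintegral_iSup_iter_ne_top [IsFiniteMeasure μ] [SFinite ν] (hν : ∀ᵐ s ∂ν, 0 < s)
    {Λ t : ℝ≥0∞} (hc : c ≠ ∞) (ht : t ≠ 0) (ht' : t ≠ ∞) (hct : c + (t + t) ≤ Λ)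
    (hE : Monotone E) (hEm : ∀ n, MeasurableSet (E n))
    (hfin : ∀ n, ∃ M : ℝ≥0∞, M ≠ ∞ ∧ ∀ x, iter μ ν c E n x ≤ M)
    (hΛ : ∀ n, Λ * ∫⁻ x, iter μ ν c E (n + 1) x ^ 2 ∂μ ≤
      ∫⁻ s, tailI μ ((E n).indicator fun u => 1 + c * iter μ ν c E n u) s ^ 2 ∂ν) :
    ∫⁻ x, ⨆ n, iter μ ν c E n x ∂μ ≠ ∞ := by
  set m := μ univ
  have hm : m ≠ ∞ := measure_ne_top _ _
  have hti : t⁻¹ ≠ ∞ := ENNReal.inv_ne_top.2 ht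
  have hint : ∀ (n : ℕ), ∫⁻ x, iter μ ν c E n x ∂μ
      ≤ t * ∫⁻ x, iter μ ν c E n x ^ 2 ∂μ + t⁻¹ * m := by
    intro n
    calc ∫⁻ x, iter μ ν c E n x ∂μ ≤ ∫⁻ x, (t * iter μ ν c E n x ^ 2 + t⁻¹) ∂μ :=
          lintegral_mono fun x => le_mul_sq_add_inv ht ht' _
      _ = _ := by
          rw [lintegral_add_right _ measurable_const, lintegral_const_mul' _ _ ht',
            lintegral_const]
  have hb : ∀ n, t * ∫⁻ x, iter μ ν c E (n + 1) x ^ 2 ∂μ ≤ t⁻¹ * m := by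
    intro n
    set A := ∫⁻ x, iter μ ν c E (n + 1) x ^ 2 ∂μ with hA
    set B := ∫⁻ x, iter μ ν c E (n + 1) x ∂μ with hB
    have hAfin : A ≠ ∞ := by
      obtain ⟨M, hM, hle⟩ := hfin (n + 1)
      refine ne_top_of_le_ne_top (b := M ^ 2 * m) (by finiteness) ?_
      calc A ≤ ∫⁻ _, M ^ 2 ∂μ := lintegral_mono fun x => by gcongr; exact hle x
        _ = _ := lintegral_const _
    -- the energy identity gives `Λ ∫ f² ≤ ∫ f + c ∫ f²` for each iterate `f`
    have h1 : Λ * A ≤ B + c * A := by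
      refine (hΛ n).trans ?_
      rw [energy ((((measurable_iter n).const_mul c).const_add 1).indicator (hEm n)) hν]
      calc ∫⁻ x, (E n).indicator (fun u => 1 + c * iter μ ν c E n u) x
              * iter μ ν c E (n + 1) x ∂μ
          ≤ ∫⁻ x, (iter μ ν c E (n + 1) x + c * iter μ ν c E (n + 1) x ^ 2) ∂μ := by
            refine lintegral_mono fun x => ?_
            calc _ ≤ (1 + c * iter μ ν c E (n + 1) x) * iter μ ν c E (n + 1) x := by
                  gcongr
                  refine (indicator_le_self _ _ x).trans ?_
                  gcongr
                  exact iter_le_succ hE n x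
              _ = _ := by ring
        _ = B + c * A := by
            rw [lintegral_add_left (measurable_iter _), lintegral_const_mul' _ _ hc]
    have h2 : c * A + (t * A + t * A) ≤ c * A + (t * A + t⁻¹ * m) := by
      calc c * A + (t * A + t * A) = (c + (t + t)) * A := by ring
        _ ≤ Λ * A := by gcongr
        _ ≤ B + c * A := h1
        _ ≤ (t * A + t⁻¹ * m) + c * A := by gcongr; exact hint (n + 1)
        _ = _ := by ring
    have h3 := (ENNReal.add_le_add_iff_left (by finiteness)).1 h2
    exact (ENNReal.add_le_add_iff_left (by finiteness)).1 h3
  have hbound : ∀ n, ∫⁻ x, iter μ ν c E n x ∂μ ≤ t⁻¹ * m + t⁻¹ * m := by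
    intro n
    refine (lintegral_mono fun x => iter_le_succ hE n x).trans ?_
    exact (hint (n + 1)).trans (add_le_add_left (hb n) _)
  rw [lintegral_iSup (fun n => measurable_iter n) (fun i j hij x => iter_mono_nat hE x hij)]
  exact ne_top_of_le_ne_top (by finiteness) (iSup_le hbound)

end Abstract2

section Interval

variable {D : ℝ≥0∞}

lemma isOpen_ooI : IsOpen (ooI D) :=
  isOpen_Ioi.inter (isOpen_Iio.preimage ENNReal.continuous_ofReal)

lemma measurableSet_ooI : MeasurableSet (ooI D) := isOpen_ooI.measurableSet

lemma ooI_subset_ccI : ooI D ⊆ ccI D := fun _ h => ⟨h.1.le, h.2.le⟩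

lemma Icc_subset_ccI {p : ℝ} (hp : ENNReal.ofReal p ≤ D) : Icc 0 p ⊆ ccI D := fun _ h =>
  ⟨h.1, (ENNReal.ofReal_le_ofReal h.2).trans hp⟩

lemma Ioo_subset_ooI {p : ℝ} (hp : ENNReal.ofReal p ≤ D) : Ioo 0 p ⊆ ooI D := fun _ h =>
  ⟨h.1, ((ENNReal.ofReal_lt_ofReal_iff (h.1.trans h.2)).2 h.2).trans_le hp⟩

lemma ooI_mem_of_le {x y : ℝ} (hx : 0 < x) (hxy : x ≤ y) (hy : ENNReal.ofReal y < D) :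
    x ∈ ooI D := ⟨hx, (ENNReal.ofReal_le_ofReal hxy).trans_lt hy⟩

/-- Right of a point of `(0, D)` there is still room inside `(0, D)`. -/
lemma exists_gt_ooI {x : ℝ} (hx : 0 ≤ x) (hxD : ENNReal.ofReal x < D) :
    ∃ y, x < y ∧ y ∈ ooI D := by
  obtain ⟨e, he, heD⟩ := exists_between hxD
  refine ⟨e.toReal, (ENNReal.ofReal_lt_iff_lt_toReal hx heD.ne_top).1 he, ?_, ?_⟩
  · exact hx.trans_lt ((ENNReal.ofReal_lt_iff_lt_toReal hx heD.ne_top).1 he)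
  · rwa [ENNReal.ofReal_toReal heD.ne_top]

lemma exists_mem_ooI (hD : 0 < D) : ∃ y, y ∈ ooI D := by
  obtain ⟨y, -, hy⟩ := exists_gt_ooI (x := 0) le_rfl (by simpa using hD)
  exact ⟨y, hy⟩

lemma continuousOn_ccI_of {f : ℝ → ℝ}
    (h : ∀ p : ℝ, 0 ≤ p → ENNReal.ofReal p ≤ D → ContinuousOn f (Icc 0 p)) :
    ContinuousOn f (ccI D) := by
  rcases eq_or_ne D ∞ with rfl | hD
  · intro x hx
    have h1 := h (x + 1) (by linarith [hx.1]) le_top x ⟨hx.1, by linarith⟩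
    refine h1.mono_of_mem_nhdsWithin ?_
    rw [mem_nhdsWithin]
    exact ⟨Iio (x + 1), isOpen_Iio, by simp, fun y hy => ⟨hy.2.1, hy.1.le⟩⟩
  · refine (h D.toReal ENNReal.toReal_nonneg (ENNReal.ofReal_toReal hD).le).mono ?_
    intro x hx
    exact ⟨hx.1, (ENNReal.ofReal_le_iff_le_toReal hD).1 hx.2⟩

end Interval

section Concrete

variable {a b : ℝ → ℝ} {D : ℝ≥0∞} {g q : ℝ → ℝ≥0∞}

lemma measurable_Cf (ha : Measurable a) (hb : Measurable b) : Measurable (Cf a b) := by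
  have h1 : Cf a b = fun x => ∫ u, {z : ℝ × ℝ | 0 < z.2 ∧ z.2 < z.1}.indicator
      (fun z : ℝ × ℝ => b z.2 / a z.2) (x, u) := by
    funext x
    unfold Cf
    rw [← integral_indicator measurableSet_Ioo]
    rfl
  have hm : Measurable ({z : ℝ × ℝ | 0 < z.2 ∧ z.2 < z.1}.indicator
      (fun z : ℝ × ℝ => b z.2 / a z.2)) := by
    refine Measurable.indicator (by fun_prop) ?_
    exact (measurableSet_lt measurable_const measurable_snd).inter
      (measurableSet_lt measurable_snd measurable_fst)
  rw [h1]
  exact (StronglyMeasurable.integral_prod_right (f := fun x u =>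
    {z : ℝ × ℝ | 0 < z.2 ∧ z.2 < z.1}.indicator (fun z => b z.2 / a z.2) (x, u))
    hm.stronglyMeasurable).measurable

lemma continuousOn_Cf (hyp : Hyp a b D) : ContinuousOn (Cf a b) (ccI D) := by
  refine continuousOn_ccI_of fun p hp hpD => ?_
  have h := intervalIntegral.continuousOn_primitive (hyp.2.2.2 p hp hpD).1
  refine h.congr fun x _ => ?_
  unfold Cf
  exact (integral_Ioc_eq_integral_Ioo).symm

lemma measurable_Cf' (hyp : Hyp a b D) : Measurable (Cf a b) := measurable_Cf hyp.1 hyp.2.1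

lemma ae_mem_muM : ∀ᵐ x ∂(muM a b D), x ∈ ooI D :=
  (withDensity_absolutelyContinuous _ _).ae_le (ae_restrict_mem measurableSet_ooI)

lemma ae_mem_nuM : ∀ᵐ x ∂(nuM a b D), x ∈ ooI D :=
  (withDensity_absolutelyContinuous _ _).ae_le (ae_restrict_mem measurableSet_ooI)

lemma ae_pos_nuM : ∀ᵐ x ∂(nuM a b D), 0 < x := ae_mem_nuM.mono fun _ h => h.1

instance : NullSingletonClass (muM a b D) := by unfold muM; infer_instance

instance : SFinite (muM a b D) := by unfold muM; infer_instance

instance : SFinite (nuM a b D) := by unfold nuM; infer_instance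

lemma volume_ac_muM (hyp : Hyp a b D) : volume.restrict (ooI D) ≪ muM a b D := by
  refine withDensity_absolutelyContinuous' ?_ ?_
  · have := measurable_Cf' hyp
    have := hyp.1
    fun_prop
  · filter_upwards [ae_restrict_mem measurableSet_ooI] with x hx
    have := hyp.2.2.1 x hx
    simp only [ne_eq, ENNReal.ofReal_eq_zero, not_le]
    positivity

lemma volume_ac_nuM (hyp : Hyp a b D) : volume.restrict (ooI D) ≪ nuM a b D := by
  refine withDensity_absolutelyContinuous' ?_ ?_
  · have := measurable_Cf' hyp
    fun_prop
  · refine Eventually.of_forall fun x => ?_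
    simp only [ne_eq, ENNReal.ofReal_eq_zero, not_le]
    positivity

lemma measure_Ioo_ne_zero {μ : Measure ℝ} (hμ : volume.restrict (ooI D) ≪ μ) {s t : ℝ}
    (hst : s < t) (h : Ioo s t ⊆ ooI D) : μ (Ioo s t) ≠ 0 := by
  intro h0
  have := hμ h0
  rw [Measure.restrict_apply measurableSet_Ioo, inter_eq_left.2 h] at this
  simp at this
  linarith

lemma setLIntegral_ne_zero {μ : Measure ℝ} (hμ : volume.restrict (ooI D) ≪ μ) {s t : ℝ}
    {S : Set ℝ} (hst : s < t) (h : Ioo s t ⊆ ooI D) (hS : Ioo s t ⊆ S) (hg : Measurable g)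
    (hpos : ∀ u ∈ Ioo s t, g u ≠ 0) : ∫⁻ u in S, g u ∂μ ≠ 0 := by
  intro h0
  have h1 : ∫⁻ u in Ioo s t, g u ∂μ = 0 :=
    le_antisymm ((lintegral_mono_set hS).trans h0.le) zero_le
  rw [lintegral_eq_zero_iff hg] at h1
  have h2 : ∀ᵐ u ∂(μ.restrict (Ioo s t)), False := by
    filter_upwards [h1, ae_restrict_mem measurableSet_Ioo] with u hu hu'
    exact hpos u hu' hu
  have h3 := ae_iff.1 h2
  simp only [not_false_eq_true, ofPred_true, Measure.restrict_apply_univ] at h3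
  exact measure_Ioo_ne_zero hμ hst h h3

lemma tailI_ne_zero (hyp : Hyp a b D) {s t : ℝ} (hst : s < t) (h : Ioo s t ⊆ ooI D)
    (hg : Measurable g) (hpos : ∀ u ∈ Ioo s t, g u ≠ 0) : tailI (muM a b D) g s ≠ 0 :=
  setLIntegral_ne_zero (volume_ac_muM hyp) hst h (fun _ hu => hu.1) hg hpos

lemma kap_ne_zero (hyp : Hyp a b D) {x : ℝ} (hx : 0 < x) (hxD : ENNReal.ofReal x ≤ D)
    (h : ∀ s ∈ Ioo 0 x, tailI (muM a b D) g s ≠ 0) : kap (muM a b D) (nuM a b D) g x ≠ 0 :=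
  setLIntegral_ne_zero (volume_ac_nuM hyp) hx (Ioo_subset_ooI hxD) subset_rfl measurable_tailI h

/-- Finiteness of `K g` at `x` forces finiteness of the tail at `x`. -/
lemma tailI_ne_top (hyp : Hyp a b D) {x : ℝ} (hx : 0 < x) (hxD : ENNReal.ofReal x ≤ D)
    (h : kap (muM a b D) (nuM a b D) g x ≠ ∞) : tailI (muM a b D) g x ≠ ∞ := by
  intro h0
  apply h
  rw [eq_top_iff]
  calc ∞ = ∞ * nuM a b D (Ioo 0 x) := (ENNReal.top_mul
        (measure_Ioo_ne_zero (volume_ac_nuM hyp) hx (Ioo_subset_ooI hxD))).symm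
    _ = ∫⁻ _ in Ioo 0 x, ∞ ∂(nuM a b D) := (setLIntegral_const _ _).symm
    _ ≤ _ := by
        refine setLIntegral_mono' measurableSet_Ioo fun s hs => ?_
        rw [← h0]
        exact tailI_antitone hs.2.le

lemma setLIntegral_nuM (hyp : Hyp a b D) {S : Set ℝ} (hS : MeasurableSet S) (hq : Measurable q) :
    ∫⁻ s in S, q s ∂(nuM a b D)
      = ∫⁻ s in S ∩ ooI D, ENNReal.ofReal (Real.exp (-Cf a b s)) * q s := by
  have := measurable_Cf' hyp
  unfold nuM
  rw [restrict_withDensity hS, Measure.restrict_restrict hS,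
    lintegral_withDensity_eq_lintegral_mul _ (by fun_prop) hq]
  rfl

lemma setLIntegral_nuM_Ioo (hyp : Hyp a b D) {x : ℝ} (hx : ENNReal.ofReal x ≤ D)
    (hq : Measurable q) : ∫⁻ s in Ioo 0 x, q s ∂(nuM a b D)
      = ∫⁻ s in Ioo 0 x, ENNReal.ofReal (Real.exp (-Cf a b s)) * q s := by
  rw [setLIntegral_nuM hyp measurableSet_Ioo hq, inter_eq_left.2 (Ioo_subset_ooI hx)]

lemma continuous_tailI (hg : Measurable g) (hfin : ∫⁻ u, g u ∂(muM a b D) ≠ ∞) :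
    Continuous fun s => (tailI (muM a b D) g s).toReal := by
  set μ := muM a b D
  have hint : Integrable (fun u => (g u).toReal) μ := integrable_toReal_of_lintegral_ne_top
    hg.aemeasurable hfin
  have hae : ∀ᵐ u ∂μ, g u < ∞ := ae_lt_top hg hfin
  have h1 : ∀ s, (tailI μ g s).toReal = (∫ u in Ioi 0, (g u).toReal ∂μ)
      - ∫ u in (0:ℝ)..s, (g u).toReal ∂μ := by
    intro s
    unfold tailI
    rw [← integral_toReal hg.aemeasurable (ae_restrict_of_ae hae)]
    rw [← intervalIntegral.integral_Ioi_sub_Ioi' hint.integrableOn hint.integrableOn]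
    simp
  simp_rw [h1]
  exact continuous_const.sub (intervalIntegral.continuous_primitive (fun _ _ =>
    hint.intervalIntegrable) 0)

end Concrete

/-! ### Regularity of K g, test functions and Poincaré inequalities -/

section Regularity

variable {a b : ℝ → ℝ} {D : ℝ≥0∞} {g : ℝ → ℝ≥0∞}

lemma tailI_ne_top_of_lintegral {μ : Measure ℝ} (hfin : ∫⁻ u, g u ∂μ ≠ ∞) (s : ℝ) :
    tailI μ g s ≠ ∞ :=
  ne_top_of_le_ne_top hfin (setLIntegral_le_lintegral _ _)

/-- The density `s ↦ e^{-C(s)} ∫_{(s,D)} g dμ` of `K g`, as a real function. -/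
def dens (a b : ℝ → ℝ) (D : ℝ≥0∞) (g : ℝ → ℝ≥0∞) (s : ℝ) : ℝ :=
  Real.exp (-Cf a b s) * (tailI (muM a b D) g s).toReal

lemma dens_nonneg (s : ℝ) : 0 ≤ dens a b D g s := by unfold dens; positivity

lemma ofReal_dens (hfin : ∫⁻ u, g u ∂(muM a b D) ≠ ∞) (s : ℝ) :
    ENNReal.ofReal (dens a b D g s)
      = ENNReal.ofReal (Real.exp (-Cf a b s)) * tailI (muM a b D) g s := by
  unfold dens
  rw [ENNReal.ofReal_mul (by positivity), ENNReal.ofReal_toReal (tailI_ne_top_of_lintegral hfin s)]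

lemma continuousOn_dens (hyp : Hyp a b D) (hg : Measurable g)
    (hfin : ∫⁻ u, g u ∂(muM a b D) ≠ ∞) : ContinuousOn (dens a b D g) (ccI D) :=
  (Real.continuous_exp.comp_continuousOn (continuousOn_Cf hyp).neg).mul
    (continuous_tailI hg hfin).continuousOn

lemma measurable_dens (hyp : Hyp a b D) : Measurable (dens a b D g) := by
  have := measurable_Cf' hyp
  have := (measurable_tailI (μ := muM a b D) (g := g))
  unfold dens
  fun_prop

lemma kap_eq (hyp : Hyp a b D) (hg : Measurable g)
    (hfin : ∫⁻ u, g u ∂(muM a b D) ≠ ∞) {x : ℝ} (hx : x ∈ ccI D) :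
    kap (muM a b D) (nuM a b D) g x = ENNReal.ofReal (∫ s in (0:ℝ)..x, dens a b D g s) := by
  have hc : ContinuousOn (dens a b D g) (Icc 0 x) :=
    (continuousOn_dens hyp hg hfin).mono (Icc_subset_ccI hx.2)
  unfold kap
  rw [setLIntegral_nuM_Ioo hyp hx.2 measurable_tailI, intervalIntegral.integral_of_le hx.1,
    integral_Ioc_eq_integral_Ioo, ofReal_integral_eq_lintegral_ofReal
      (hc.integrableOn_Icc.mono_set Ioo_subset_Icc_self)
      (Eventually.of_forall fun s => dens_nonneg s)]
  exact lintegral_congr fun s => (ofReal_dens hfin s).symm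

/-- `K g` as a real-valued function. -/
def Kr (a b : ℝ → ℝ) (D : ℝ≥0∞) (g : ℝ → ℝ≥0∞) (x : ℝ) : ℝ :=
  (kap (muM a b D) (nuM a b D) g x).toReal

lemma Kr_eq (hyp : Hyp a b D) (hg : Measurable g)
    (hfin : ∫⁻ u, g u ∂(muM a b D) ≠ ∞) {x : ℝ} (hx : x ∈ ccI D) :
    Kr a b D g x = ∫ s in (0:ℝ)..x, dens a b D g s := by
  unfold Kr
  rw [kap_eq hyp hg hfin hx, ENNReal.toReal_ofReal]
  exact intervalIntegral.integral_nonneg hx.1 fun s _ => dens_nonneg s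

lemma kap_ne_top (hyp : Hyp a b D) (hg : Measurable g)
    (hfin : ∫⁻ u, g u ∂(muM a b D) ≠ ∞) {x : ℝ} (hx : x ∈ ccI D) :
    kap (muM a b D) (nuM a b D) g x ≠ ∞ := by
  rw [kap_eq hyp hg hfin hx]; exact ENNReal.ofReal_ne_top

lemma Kr_nonneg (x : ℝ) : 0 ≤ Kr a b D g x := ENNReal.toReal_nonneg

lemma Kr_zero : Kr a b D g 0 = 0 := by simp [Kr, kap_zero]

lemma ofReal_Kr (hyp : Hyp a b D) (hg : Measurable g)
    (hfin : ∫⁻ u, g u ∂(muM a b D) ≠ ∞) {x : ℝ} (hx : x ∈ ccI D) :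
    ENNReal.ofReal (Kr a b D g x) = kap (muM a b D) (nuM a b D) g x :=
  ENNReal.ofReal_toReal (kap_ne_top hyp hg hfin hx)

lemma continuousOn_Kr (hyp : Hyp a b D) (hg : Measurable g)
    (hfin : ∫⁻ u, g u ∂(muM a b D) ≠ ∞) : ContinuousOn (Kr a b D g) (ccI D) := by
  refine continuousOn_ccI_of fun p hp hpD => ?_
  have hc : ContinuousOn (dens a b D g) (Icc 0 p) :=
    (continuousOn_dens hyp hg hfin).mono (Icc_subset_ccI hpD)
  have h := intervalIntegral.continuousOn_primitive
    (hc.integrableOn_Icc (μ := volume))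
  refine h.congr fun x hx => ?_
  rw [Kr_eq hyp hg hfin (Icc_subset_ccI hpD hx), intervalIntegral.integral_of_le hx.1]

lemma hasDerivAt_Kr (hyp : Hyp a b D) (hg : Measurable g)
    (hfin : ∫⁻ u, g u ∂(muM a b D) ≠ ∞) {x : ℝ} (hx : x ∈ ooI D) :
    HasDerivAt (Kr a b D g) (dens a b D g x) x := by
  have hcc := continuousOn_dens hyp hg hfin
  have hc : ContinuousOn (dens a b D g) (Icc 0 x) := hcc.mono (Icc_subset_ccI hx.2.le)
  have h1 : HasDerivAt (fun u => ∫ s in (0:ℝ)..u, dens a b D g s) (dens a b D g x) x := by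
    refine intervalIntegral.integral_hasDerivAt_right ?_ ?_ ?_
    · exact hc.intervalIntegrable_of_Icc hx.1.le
    · exact (measurable_dens hyp).stronglyMeasurable.stronglyMeasurableAtFilter
    · exact (hcc.mono ooI_subset_ccI).continuousAt (isOpen_ooI.mem_nhds hx)
  refine h1.congr_of_eventuallyEq ?_
  filter_upwards [isOpen_ooI.mem_nhds hx] with y hy
  exact Kr_eq hyp hg hfin (ooI_subset_ccI hy)

lemma C1C_Kr (hyp : Hyp a b D) (hg : Measurable g)
    (hfin : ∫⁻ u, g u ∂(muM a b D) ≠ ∞) : C1C D (Kr a b D g) := by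
  refine ⟨continuousOn_Kr hyp hg hfin,
    fun x hx => (hasDerivAt_Kr hyp hg hfin hx).differentiableAt, ?_⟩
  refine ((continuousOn_dens hyp hg hfin).mono ooI_subset_ccI).congr fun x hx => ?_
  exact (hasDerivAt_Kr hyp hg hfin hx).deriv

/-- Beyond the truncation point `deriv` vanishes; at `x₀` itself this covers the non-differentiable
case, where `deriv` is `0` by convention. -/
lemma deriv_trunc {f : ℝ → ℝ} {x₀ x : ℝ} (hf : ∀ x, f x = f (min x x₀)) (hx : x₀ ≤ x) :
    deriv f x = 0 := by
  by_cases hd : DifferentiableAt ℝ f x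
  · have h1 : HasDerivWithinAt f (deriv f x) (Ici x) x := hd.hasDerivAt.hasDerivWithinAt
    have h2 : HasDerivWithinAt f 0 (Ici x) x := by
      refine (hasDerivWithinAt_const x (Ici x) (f x₀)).congr (fun y hy => ?_) ?_
      · rw [hf y, min_eq_right (hx.trans hy)]
      · rw [hf x, min_eq_right hx]
    exact (uniqueDiffOn_Ici x x self_mem_Ici).eq_deriv _ h1 h2
  · exact deriv_zero_of_not_differentiableAt hd

/-- Cutting `ν` off at `x₀` freezes `K g` at its value in `x₀`. -/
lemma kap_restrict_Iio {μ ν : Measure ℝ} (x₀ x : ℝ) :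
    kap μ (ν.restrict (Iio x₀)) g x = kap μ ν g (min x x₀) := by
  unfold kap
  rw [Measure.restrict_restrict measurableSet_Ioo]
  congr 2
  ext s
  simp [and_assoc]

/-- The truncation `K g(· ∧ x₀)`. -/
def Kt (a b : ℝ → ℝ) (D : ℝ≥0∞) (g : ℝ → ℝ≥0∞) (x₀ x : ℝ) : ℝ := Kr a b D g (min x x₀)

lemma Kt_trunc (x₀ x : ℝ) : Kt a b D g x₀ x = Kt a b D g x₀ (min x x₀) := by
  unfold Kt; rw [min_assoc, min_self]

lemma hasDerivAt_Kt (hyp : Hyp a b D) (hg : Measurable g)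
    (hfin : ∫⁻ u, g u ∂(muM a b D) ≠ ∞) {x₀ x : ℝ} (hx₀ : ENNReal.ofReal x₀ < D)
    (hx : x ∈ Ioo 0 x₀) :
    HasDerivAt (Kt a b D g x₀) (dens a b D g x) x := by
  refine (hasDerivAt_Kr hyp hg hfin (Ioo_subset_ooI hx₀.le hx)).congr_of_eventuallyEq ?_
  filter_upwards [Iio_mem_nhds hx.2] with y hy
  simp [Kt, min_eq_left (le_of_lt (mem_Iio.1 hy))]

lemma continuousOn_Kt (hyp : Hyp a b D) (hg : Measurable g)
    (hfin : ∫⁻ u, g u ∂(muM a b D) ≠ ∞) {x₀ : ℝ} (h0 : 0 < x₀) (hx₀ : ENNReal.ofReal x₀ < D) :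
    ContinuousOn (Kt a b D g x₀) (ccI D) := by
  refine (continuousOn_Kr hyp hg hfin).comp (by fun_prop) fun x hx => ?_
  exact Icc_subset_ccI hx₀.le ⟨le_min hx.1 h0.le, min_le_right _ _⟩

lemma continuousOn_deriv_Kt (hyp : Hyp a b D) (hg : Measurable g)
    (hfin : ∫⁻ u, g u ∂(muM a b D) ≠ ∞) {x₀ : ℝ} (hx₀ : ENNReal.ofReal x₀ < D) :
    ContinuousOn (deriv (Kt a b D g x₀)) (Ioo 0 x₀) := by
  refine ((continuousOn_dens hyp hg hfin).mono
    ((Ioo_subset_ooI hx₀.le).trans ooI_subset_ccI)).congr fun x hx => ?_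
  exact (hasDerivAt_Kt hyp hg hfin hx₀ hx).deriv

end Regularity

section Dirichlet

variable {a b : ℝ → ℝ} {D : ℝ≥0∞} {f : ℝ → ℝ}

/-- The density `e^C |f'|` of the total variation of `f` with respect to `ν`. -/
def slope' (a b : ℝ → ℝ) (f : ℝ → ℝ) (s : ℝ) : ℝ≥0∞ :=
  ENNReal.ofReal (Real.exp (Cf a b s) * |deriv f s|)

lemma measurable_slope' (hyp : Hyp a b D) : Measurable (slope' a b f) := by
  have := measurable_Cf' hyp
  have := measurable_deriv f
  unfold slope'
  fun_prop

lemma Dform_eq (hyp : Hyp a b D) :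
    Dform a b D f = ∫⁻ s, slope' a b f s ^ 2 ∂(nuM a b D) := by
  have h := setLIntegral_nuM hyp MeasurableSet.univ ((measurable_slope' (f := f) hyp).pow_const 2)
  rw [setLIntegral_univ, univ_inter] at h
  rw [h]
  refine lintegral_congr fun s => ?_
  unfold slope'
  rw [← ENNReal.ofReal_pow (by positivity), ← ENNReal.ofReal_mul (by positivity)]
  congr 1
  rw [mul_pow, sq_abs, sq (Real.exp _), Real.exp_neg]
  field_simp

lemma muL2_eq : muL2 a b D f = ∫⁻ x, ENNReal.ofReal |f x| ^ 2 ∂(muM a b D) := by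
  refine lintegral_congr fun x => ?_
  rw [← ENNReal.ofReal_pow (abs_nonneg _), sq_abs]

lemma setLIntegral_slope' (hyp : Hyp a b D) {x : ℝ} (hx : ENNReal.ofReal x ≤ D) :
    ∫⁻ s in Ioo 0 x, slope' a b f s ∂(nuM a b D)
      = ∫⁻ s in Ioo 0 x, ENNReal.ofReal |deriv f s| := by
  rw [setLIntegral_nuM_Ioo hyp hx (measurable_slope' hyp)]
  refine lintegral_congr fun s => ?_
  unfold slope'
  rw [← ENNReal.ofReal_mul (by positivity), ← mul_assoc, ← Real.exp_add]
  simp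

/-- `|f(x)|` is at most the total variation of `f` on `(0, x)`, which may be infinite. -/
lemma abs_le_slope' (hyp : Hyp a b D) {x : ℝ} (hx : x ∈ ccI D) (hf0 : f 0 = 0)
    (hc : ContinuousOn f (Icc 0 x)) (hd : ∀ y ∈ Ioo 0 x, DifferentiableAt ℝ f y) :
    ENNReal.ofReal |f x| ≤ ∫⁻ s in Ioo 0 x, slope' a b f s ∂(nuM a b D) := by
  rw [setLIntegral_slope' hyp hx.2]
  by_cases hfin : ∫⁻ s in Ioo 0 x, ENNReal.ofReal |deriv f s| = ∞
  · rw [hfin]; exact le_top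
  have hint : IntegrableOn (deriv f) (Ioo 0 x) := by
    refine ⟨(measurable_deriv f).aestronglyMeasurable, ?_⟩
    rw [hasFiniteIntegral_iff_norm]
    exact lt_top_iff_ne_top.2 hfin
  have hint' : IntervalIntegrable (deriv f) volume 0 x := by
    rw [intervalIntegrable_iff_integrableOn_Ioo_of_le hx.1]
    exact hint
  have h1 := intervalIntegral.integral_eq_sub_of_hasDerivAt_of_le hx.1 hc
    (fun y hy => (hd y hy).hasDerivAt) hint'
  rw [hf0, sub_zero, intervalIntegral.integral_of_le hx.1, integral_Ioc_eq_integral_Ioo] at h1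
  rw [← h1]
  calc ENNReal.ofReal |∫ s in Ioo 0 x, deriv f s|
      = ‖∫ s in Ioo 0 x, deriv f s‖ₑ := by rw [← ofReal_norm]; rfl
    _ ≤ ∫⁻ s in Ioo 0 x, ‖deriv f s‖ₑ := enorm_integral_le_lintegral_enorm _
    _ = _ := lintegral_congr fun s => by rw [← ofReal_norm]; rfl

/-- A strictly increasing `f` with `f 0 = 0` has an integrable derivative, and its value at `x` is
its total variation on `(0, x)`. -/
lemma setLIntegral_deriv_eq {x : ℝ} (hx : 0 ≤ x) (hf0 : f 0 = 0)
    (hc : ContinuousOn f (Icc 0 x)) (hd : ∀ y ∈ Ioo 0 x, DifferentiableAt ℝ f y)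
    (hpos : ∀ y ∈ Ioo 0 x, 0 < deriv f y) :
    ∫⁻ s in Ioo 0 x, ENNReal.ofReal (deriv f s) = ENNReal.ofReal (f x) := by
  have hint := intervalIntegral.integrableOn_deriv_of_nonneg hc
    (fun y hy => (hd y hy).hasDerivAt) (fun y hy => (hpos y hy).le)
  have h1 := intervalIntegral.integral_eq_sub_of_hasDerivAt_of_le hx hc
    (fun y hy => (hd y hy).hasDerivAt)
    ((intervalIntegrable_iff_integrableOn_Ioc_of_le hx).2 hint)
  rw [hf0, sub_zero, intervalIntegral.integral_of_le hx, integral_Ioc_eq_integral_Ioo] at h1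
  rw [← h1, ofReal_integral_eq_lintegral_ofReal (hint.mono_set Ioo_subset_Ioc_self)]
  filter_upwards [ae_restrict_mem measurableSet_Ioo] with y hy
  exact (hpos y hy).le

/-- Membership in the class of test functions of `λ̃₀` with truncation point `x₀`. -/
structure TilTest (D : ℝ≥0∞) (x₀ : ℝ) (f : ℝ → ℝ) : Prop where
  pos : 0 < x₀
  lt : ENNReal.ofReal x₀ < D
  zero : f 0 = 0
  trunc : ∀ x : ℝ, f x = f (min x x₀)
  cont : ContinuousOn f (Icc 0 x₀)
  diff : ∀ x ∈ Ioo 0 x₀, DifferentiableAt ℝ f x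
  contd : ContinuousOn (deriv f) (Ioo 0 x₀)

/-- For functions frozen beyond `x₀`, the total variation may be computed with `ν` cut off at `x₀`. -/
lemma TilTest.abs_le {x₀ : ℝ} (h : TilTest D x₀ f) (hyp : Hyp a b D) {x : ℝ} (hx : x ∈ ccI D) :
    ENNReal.ofReal |f x|
      ≤ ∫⁻ s in Ioo 0 x, slope' a b f s ∂((nuM a b D).restrict (Iio x₀)) := by
  have hx' : min x x₀ ∈ Icc 0 x₀ := ⟨le_min hx.1 h.pos.le, min_le_right _ _⟩
  rw [h.trunc x]
  refine (abs_le_slope' hyp (Icc_subset_ccI h.lt.le hx') h.zero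
    (h.cont.mono (Icc_subset_Icc_right hx'.2))
    (fun y hy => h.diff y ⟨hy.1, hy.2.trans_le hx'.2⟩)).trans (le_of_eq ?_)
  rw [Measure.restrict_restrict measurableSet_Ioo]
  congr 2
  ext s
  simp [and_assoc]

lemma C1C.abs_le (h : C1C D f) (hf0 : f 0 = 0) (hyp : Hyp a b D) {x : ℝ} (hx : x ∈ ccI D) :
    ENNReal.ofReal |f x| ≤ ∫⁻ s in Ioo 0 x, slope' a b f s ∂(nuM a b D) :=
  abs_le_slope' hyp hx hf0 (h.1.mono (Icc_subset_ccI hx.2))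
    (fun y hy => h.2.1 y (Ioo_subset_ooI hx.2 hy))

/-- A test function of zero energy vanishes. -/
lemma Dform_ne_zero (hyp : Hyp a b D)
    (habs : ∀ x ∈ ccI D, ENNReal.ofReal |f x| ≤ ∫⁻ s in Ioo 0 x, slope' a b f s ∂(nuM a b D))
    (hne : ¬∀ x ∈ ccI D, f x = 0) : Dform a b D f ≠ 0 := by
  intro h0
  apply hne
  rw [Dform_eq hyp, lintegral_eq_zero_iff ((measurable_slope' hyp).pow_const 2)] at h0
  intro x hx
  have h1 : ∫⁻ s in Ioo 0 x, slope' a b f s ∂(nuM a b D) = 0 := by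
    rw [lintegral_eq_zero_iff (measurable_slope' hyp)]
    refine ae_restrict_of_ae ?_
    filter_upwards [h0] with s hs
    simpa using hs
  have h2 := habs x hx
  rw [h1] at h2
  simpa using h2

lemma TilTest.abs_le' {x₀ : ℝ} (h : TilTest D x₀ f) (hyp : Hyp a b D) {x : ℝ} (hx : x ∈ ccI D) :
    ENNReal.ofReal |f x| ≤ ∫⁻ s in Ioo 0 x, slope' a b f s ∂(nuM a b D) :=
  (h.abs_le hyp hx).trans (lintegral_mono' (Measure.restrict_mono subset_rfl
    Measure.restrict_le_self) le_rfl)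

lemma TilTest.muL2_ne_top {x₀ : ℝ} (h : TilTest D x₀ f) (hmu : muM a b D univ ≠ ∞) :
    muL2 a b D f ≠ ∞ := by
  obtain ⟨M, hM⟩ := isCompact_Icc.exists_bound_of_continuousOn h.cont
  refine ne_top_of_le_ne_top (b := ENNReal.ofReal M ^ 2 * muM a b D univ) (by finiteness) ?_
  rw [muL2_eq, ← lintegral_const]
  refine lintegral_mono_ae ?_
  filter_upwards [ae_mem_muM] with x hx
  have := hM (min x x₀) ⟨le_min hx.1.le h.pos.le, min_le_right _ _⟩
  rw [← h.trunc] at this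
  gcongr
  exact this

lemma lam0DN_mul_le (h : C1C D f) (hf0 : f 0 = 0) :
    lam0DN a b D * muL2 a b D f ≤ Dform a b D f := by
  by_cases hD : Dform a b D f = ∞
  · rw [hD]; exact le_top
  by_cases hne : ∀ x ∈ ccI D, f x = 0
  · have : muL2 a b D f = 0 := by
      rw [muL2_eq, ← lintegral_zero (μ := muM a b D)]
      refine lintegral_congr_ae ?_
      filter_upwards [ae_mem_muM] with x hx
      simp [hne x (ooI_subset_ccI hx)]
    simp [this]
  · exact ENNReal.mul_le_of_le_div (sInf_le ⟨f, h, hD, hf0, hne, rfl⟩)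

lemma lam0tilDN_mul_le {x₀ : ℝ} (h : TilTest D x₀ f) :
    lam0tilDN a b D * muL2 a b D f ≤ Dform a b D f := by
  by_cases hne : ∀ x ∈ ccI D, f x = 0
  · have : muL2 a b D f = 0 := by
      rw [muL2_eq, ← lintegral_zero (μ := muM a b D)]
      refine lintegral_congr_ae ?_
      filter_upwards [ae_mem_muM] with x hx
      simp [hne x (ooI_subset_ccI hx)]
    simp [this]
  · exact ENNReal.mul_le_of_le_div
      (sInf_le ⟨f, x₀, h.pos, h.lt, h.zero, h.trunc, h.cont, h.diff, h.contd, hne, rfl⟩)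

lemma le_lam0DN (hyp : Hyp a b D) {c : ℝ≥0∞}
    (h : ∀ f, C1C D f → f 0 = 0 → c * muL2 a b D f ≤ Dform a b D f) : c ≤ lam0DN a b D := by
  refine le_sInf ?_
  rintro r ⟨f, hf, hDf, hf0, hne, rfl⟩
  exact (ENNReal.le_div_iff_mul_le (Or.inr (Dform_ne_zero hyp (fun x hx => hf.abs_le hf0 hyp hx)
    hne)) (Or.inr hDf)).2 (h f hf hf0)

lemma le_lam0tilDN (hyp : Hyp a b D) (hmu : muM a b D univ ≠ ∞) {c : ℝ≥0∞}
    (h : ∀ f x₀, TilTest D x₀ f → c * muL2 a b D f ≤ Dform a b D f) : c ≤ lam0tilDN a b D := by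
  refine le_sInf ?_
  rintro r ⟨f, x₀, h1, h2, h3, h4, h5, h6, h7, hne, rfl⟩
  have hf : TilTest D x₀ f := ⟨h1, h2, h3, h4, h5, h6, h7⟩
  exact (ENNReal.le_div_iff_mul_le (Or.inr (Dform_ne_zero hyp (fun x hx => hf.abs_le' hyp hx)
    hne)) (Or.inl (hf.muL2_ne_top hmu))).2 (h f x₀ hf)

/-- A positive supersolution of the full problem gives a Poincaré inequality. -/
lemma poincare_C1 (hyp : Hyp a b D) {φ : ℝ → ℝ≥0∞} {c : ℝ≥0∞} (hφ : Measurable φ)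
    (hH : ∀ s ∈ ooI D, tailI (muM a b D) φ s ≠ 0 ∧ tailI (muM a b D) φ s ≠ ∞)
    (hle : ∀ x ∈ ooI D, c * kap (muM a b D) (nuM a b D) φ x ≤ φ x)
    (hf : C1C D f) (hf0 : f 0 = 0) : c * muL2 a b D f ≤ Dform a b D f := by
  rw [Dform_eq hyp]
  refine le_trans ?_ (hardy hφ (measurable_slope' hyp) ae_pos_nuM (ae_mem_nuM.mono hH)
    (ae_mem_muM.mono hle))
  rw [muL2_eq]
  refine mul_le_mul_right (lintegral_mono_ae ?_) c
  filter_upwards [ae_mem_muM] with x hx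
  gcongr
  exact hf.abs_le hf0 hyp (ooI_subset_ccI hx)

/-- A positive supersolution of the problem truncated at `x₀` gives a Poincaré inequality for
functions constant on `[x₀, D)`. -/
lemma poincare_til (hyp : Hyp a b D) {φ : ℝ → ℝ≥0∞} {c : ℝ≥0∞} (hφ : Measurable φ) {x₀ : ℝ}
    (hH : ∀ s ∈ ooI D, tailI (muM a b D) φ s ≠ 0 ∧ tailI (muM a b D) φ s ≠ ∞)
    (hle : ∀ x ∈ ooI D, c * kap (muM a b D) ((nuM a b D).restrict (Iio x₀)) φ x ≤ φ x)
    (hf : TilTest D x₀ f) : c * muL2 a b D f ≤ Dform a b D f := by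
  rw [Dform_eq hyp]
  refine le_trans ?_ (setLIntegral_le_lintegral (Iio x₀) _)
  refine le_trans ?_ (hardy hφ (measurable_slope' hyp) (ae_restrict_of_ae ae_pos_nuM)
    (ae_restrict_of_ae (ae_mem_nuM.mono hH)) (ae_mem_muM.mono hle))
  rw [muL2_eq]
  refine mul_le_mul_right (lintegral_mono_ae ?_) c
  filter_upwards [ae_mem_muM] with x hx
  gcongr
  exact hf.abs_le hyp (ooI_subset_ccI hx)

end Dirichlet

/-! ### Energies of K g and comparison of the operators I and II -/

section Energy

variable {a b : ℝ → ℝ} {D : ℝ≥0∞} {g : ℝ → ℝ≥0∞}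

lemma slope'_of_deriv (hfin : ∫⁻ u, g u ∂(muM a b D) ≠ ∞) {f : ℝ → ℝ} {s : ℝ}
    (h : deriv f s = dens a b D g s) : slope' a b f s = tailI (muM a b D) g s := by
  unfold slope'
  rw [h, abs_of_nonneg (dens_nonneg s)]
  unfold dens
  rw [← mul_assoc, ← Real.exp_add]
  simp [ENNReal.ofReal_toReal (tailI_ne_top_of_lintegral hfin s)]

lemma Dform_Kr (hyp : Hyp a b D) (hg : Measurable g) (hfin : ∫⁻ u, g u ∂(muM a b D) ≠ ∞) :
    Dform a b D (Kr a b D g) = ∫⁻ s, tailI (muM a b D) g s ^ 2 ∂(nuM a b D) := by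
  rw [Dform_eq hyp]
  refine lintegral_congr_ae ?_
  filter_upwards [ae_mem_nuM] with s hs
  rw [slope'_of_deriv hfin (hasDerivAt_Kr hyp hg hfin hs).deriv]

lemma muL2_Kr (hyp : Hyp a b D) (hg : Measurable g) (hfin : ∫⁻ u, g u ∂(muM a b D) ≠ ∞) :
    muL2 a b D (Kr a b D g)
      = ∫⁻ x, kap (muM a b D) (nuM a b D) g x ^ 2 ∂(muM a b D) := by
  rw [muL2_eq]
  refine lintegral_congr_ae ?_
  filter_upwards [ae_mem_muM] with x hx
  rw [abs_of_nonneg (Kr_nonneg x), ofReal_Kr hyp hg hfin (ooI_subset_ccI hx)]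

lemma tilTest_Kt (hyp : Hyp a b D) (hg : Measurable g) (hfin : ∫⁻ u, g u ∂(muM a b D) ≠ ∞)
    {x₀ : ℝ} (h0 : 0 < x₀) (hx₀ : ENNReal.ofReal x₀ < D) : TilTest D x₀ (Kt a b D g x₀) where
  pos := h0
  lt := hx₀
  zero := by simp [Kt, min_eq_left h0.le, Kr_zero]
  trunc := Kt_trunc x₀
  cont := (continuousOn_Kt hyp hg hfin h0 hx₀).mono (Icc_subset_ccI hx₀.le)
  diff := fun _ hx => (hasDerivAt_Kt hyp hg hfin hx₀ hx).differentiableAt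
  contd := continuousOn_deriv_Kt hyp hg hfin hx₀

lemma Dform_Kt (hyp : Hyp a b D) (hg : Measurable g) (hfin : ∫⁻ u, g u ∂(muM a b D) ≠ ∞)
    {x₀ : ℝ} (hx₀ : ENNReal.ofReal x₀ < D) :
    Dform a b D (Kt a b D g x₀)
      = ∫⁻ s, tailI (muM a b D) g s ^ 2 ∂((nuM a b D).restrict (Iio x₀)) := by
  rw [Dform_eq hyp, ← lintegral_indicator measurableSet_Iio]
  refine lintegral_congr_ae ?_
  filter_upwards [ae_mem_nuM] with s hs
  by_cases h : s < x₀
  · rw [slope'_of_deriv hfin (hasDerivAt_Kt hyp hg hfin hx₀ ⟨hs.1, h⟩).deriv,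
      indicator_of_mem (mem_Iio.2 h)]
  · rw [indicator_of_notMem (by simpa using h), slope',
      deriv_trunc (Kt_trunc x₀) (not_lt.1 h)]
    simp

lemma min_mem_ccI {x x₀ : ℝ} (h0 : 0 < x₀) (hx₀ : ENNReal.ofReal x₀ < D) (hx : 0 ≤ x) :
    min x x₀ ∈ ccI D :=
  Icc_subset_ccI hx₀.le ⟨le_min hx h0.le, min_le_right _ _⟩

lemma min_mem_ooI {x x₀ : ℝ} (h0 : 0 < x₀) (hx₀ : ENNReal.ofReal x₀ < D) (hx : 0 < x) :
    min x x₀ ∈ ooI D :=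
  ooI_mem_of_le (lt_min hx h0) (min_le_right _ _) hx₀

lemma ofReal_Kt (hyp : Hyp a b D) (hg : Measurable g) (hfin : ∫⁻ u, g u ∂(muM a b D) ≠ ∞)
    {x₀ x : ℝ} (h0 : 0 < x₀) (hx₀ : ENNReal.ofReal x₀ < D) (hx : 0 ≤ x) :
    ENNReal.ofReal (Kt a b D g x₀ x)
      = kap (muM a b D) ((nuM a b D).restrict (Iio x₀)) g x := by
  unfold Kt
  rw [ofReal_Kr hyp hg hfin (min_mem_ccI h0 hx₀ hx), kap_restrict_Iio]

lemma muL2_Kt (hyp : Hyp a b D) (hg : Measurable g) (hfin : ∫⁻ u, g u ∂(muM a b D) ≠ ∞)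
    {x₀ : ℝ} (h0 : 0 < x₀) (hx₀ : ENNReal.ofReal x₀ < D) :
    muL2 a b D (Kt a b D g x₀)
      = ∫⁻ x, kap (muM a b D) ((nuM a b D).restrict (Iio x₀)) g x ^ 2 ∂(muM a b D) := by
  rw [muL2_eq]
  refine lintegral_congr_ae ?_
  filter_upwards [ae_mem_muM] with x hx
  rw [abs_of_nonneg (show 0 ≤ Kt a b D g x₀ x from Kr_nonneg _), ofReal_Kt hyp hg hfin h0 hx₀ hx.1.le]

/-- If `g` vanishes beyond `x₀` then `K g` is constant there. -/
lemma kap_eq_trunc {μ ν : Measure ℝ} {x₀ : ℝ} (h : ∀ u, x₀ < u → g u = 0) (x : ℝ) :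
    kap μ ν g x = kap μ ν g (min x x₀) := by
  rw [← kap_restrict_Iio]
  unfold kap
  have h1 : tailI μ g = (Iio x₀).indicator (tailI μ g) := by
    funext s
    by_cases hs : s < x₀
    · rw [indicator_of_mem (mem_Iio.2 hs)]
    · rw [indicator_of_notMem (by simpa using hs)]
      unfold tailI
      rw [setLIntegral_congr_fun measurableSet_Ioi
        (fun u hu => h u ((not_lt.1 hs).trans_lt hu))]
      simp
  rw [h1, Measure.restrict_restrict measurableSet_Ioo, setLIntegral_indicator measurableSet_Iio,
    setLIntegral_indicator measurableSet_Iio]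
  congr 2
  ext s
  simp only [mem_inter_iff, mem_Iio, mem_Ioo]
  tauto

lemma lintegral_ne_top_of_bdd (hmu : muM a b D univ ≠ ∞) {M : ℝ≥0∞} (hM : M ≠ ∞)
    (h : ∀ x ∈ ooI D, g x ≤ M) : ∫⁻ u, g u ∂(muM a b D) ≠ ∞ := by
  refine ne_top_of_le_ne_top (b := M * muM a b D univ) (by finiteness) ?_
  rw [← lintegral_const]
  exact lintegral_mono_ae (ae_mem_muM.mono h)

lemma measurable_indicator_ofReal {f : ℝ → ℝ} (hf : ContinuousOn f (ooI D)) :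
    Measurable ((ooI D).indicator fun u => ENNReal.ofReal (f u)) := by
  classical
  rw [← piecewise_eq_indicator]
  exact ContinuousOn.measurable_piecewise (ENNReal.continuous_ofReal.comp_continuousOn hf)
    continuousOn_const measurableSet_ooI

lemma kap_indicator (f : ℝ → ℝ) :
    kap (muM a b D) (nuM a b D) ((ooI D).indicator fun u => ENNReal.ofReal (f u))
      = kap (muM a b D) (nuM a b D) fun u => ENNReal.ofReal (f u) :=
  kap_congr (ae_mem_muM.mono fun u hu => by rw [indicator_of_mem hu])

lemma le_inv_div_iff {c K f : ℝ≥0∞} (hf0 : f ≠ 0) (hf : f ≠ ∞) : c ≤ (K / f)⁻¹ ↔ c * K ≤ f := by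
  rw [ENNReal.inv_div (Or.inl hf) (Or.inl hf0),
    ENNReal.le_div_iff_mul_le (Or.inr hf0) (Or.inr hf)]

/-- The case `f = 0`, where `K / f` may be `∞` or `0 / 0 = 0`, is included. -/
lemma le_mul_of_inv_div_le {c K f : ℝ≥0∞} (hK : K ≠ ∞) (hf : f ≠ ∞) (hc : c ≠ ∞)
    (h : (K / f)⁻¹ ≤ c) : f ≤ c * K := by
  rcases eq_or_ne f 0 with rfl | hf0
  · exact zero_le
  · rw [ENNReal.inv_div (Or.inl hf) (Or.inl hf0)] at h
    exact (ENNReal.div_le_iff_le_mul (Or.inr hc) (Or.inl hK)).1 h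

lemma inv_div_le_of {c K f : ℝ≥0∞} (hf0 : f ≠ 0) (hf : f ≠ ∞) (h : f ≤ c * K) :
    (K / f)⁻¹ ≤ c := by
  rw [ENNReal.inv_div (Or.inl hf) (Or.inl hf0)]
  exact ENNReal.div_le_of_le_mul h

end Energy

section Formulas

variable {a b : ℝ → ℝ} {D : ℝ≥0∞}

lemma opIIdn_eq (f : ℝ → ℝ) (x : ℝ) : opIIdn a b D f x
    = kap (muM a b D) (nuM a b D) (fun u => ENNReal.ofReal (f u)) x / ENNReal.ofReal (f x) := rfl

lemma opIdn_eq (f : ℝ → ℝ) (x : ℝ) : opIdn a b D f x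
    = ENNReal.ofReal (Real.exp (-Cf a b x)) * tailI (muM a b D) (fun u => ENNReal.ofReal (f u)) x
      / ENNReal.ofReal (deriv f x) := rfl

/-- The supersolution facts extracted from a lower bound `c ≤ II(f)⁻¹`. -/
lemma superSol (hyp : Hyp a b D) {f : ℝ → ℝ} (hf : f ∈ FIIdn D) {c : ℝ≥0∞} (hc : c ≠ 0)
    (h : ∀ x ∈ ooI D, c ≤ (opIIdn a b D f x)⁻¹) :
    ∃ φ : ℝ → ℝ≥0∞, Measurable φ ∧
      (∀ s ∈ ooI D, tailI (muM a b D) φ s ≠ 0 ∧ tailI (muM a b D) φ s ≠ ∞) ∧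
      ∀ x ∈ ooI D, c * kap (muM a b D) (nuM a b D) φ x ≤ φ x := by
  obtain ⟨hfc, hf0, hfpos⟩ := hf
  have hm := measurable_indicator_ofReal (hfc.mono ooI_subset_ccI)
  have hle : ∀ x ∈ ooI D, c * kap (muM a b D) (nuM a b D)
      ((ooI D).indicator fun u => ENNReal.ofReal (f u)) x
      ≤ (ooI D).indicator (fun u => ENNReal.ofReal (f u)) x := by
    intro x hx
    rw [kap_indicator, indicator_of_mem hx]
    exact (le_inv_div_iff (by simpa using hfpos x hx) ENNReal.ofReal_ne_top).1 (h x hx)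
  refine ⟨_, hm, fun s hs => ⟨?_, ?_⟩, hle⟩
  · obtain ⟨t, hst, ht⟩ := exists_gt_ooI hs.1.le hs.2
    have hsub : Ioo s t ⊆ ooI D := fun u hu => ooI_mem_of_le (hs.1.trans hu.1) hu.2.le ht.2
    refine tailI_ne_zero hyp hst hsub hm fun u hu => ?_
    rw [indicator_of_mem (hsub hu)]
    simpa using hfpos u (hsub hu)
  · refine tailI_ne_top hyp hs.1 hs.2.le fun htop => ?_
    have := hle s hs
    rw [htop, ENNReal.mul_top hc, indicator_of_mem hs] at this
    exact ENNReal.ofReal_ne_top (top_le_iff.1 this)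

lemma iSup_FII_le_lam0DN (hyp : Hyp a b D) :
    (⨆ f ∈ FIIdn D, ⨅ x ∈ ooI D, (opIIdn a b D f x)⁻¹) ≤ lam0DN a b D := by
  refine iSup₂_le fun f hf => ?_
  set c := ⨅ x ∈ ooI D, (opIIdn a b D f x)⁻¹ with hcdef
  rcases eq_or_ne c 0 with hc | hc
  · rw [hc]; exact zero_le
  obtain ⟨φ, hm, hH, hle⟩ := superSol hyp hf hc (fun x hx => iInf₂_le x hx)
  exact le_lam0DN hyp fun g hg hg0 => poincare_C1 hyp hm hH hle hg hg0

lemma iSup_FII_le_lam0tilDN (hyp : Hyp a b D) (hmu : muM a b D univ ≠ ∞) :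
    (⨆ f ∈ FIIdn D, ⨅ x ∈ ooI D, (opIIdn a b D f x)⁻¹) ≤ lam0tilDN a b D := by
  refine iSup₂_le fun f hf => ?_
  set c := ⨅ x ∈ ooI D, (opIIdn a b D f x)⁻¹ with hcdef
  rcases eq_or_ne c 0 with hc | hc
  · rw [hc]; exact zero_le
  obtain ⟨φ, hm, hH, hle⟩ := superSol hyp hf hc (fun x hx => iInf₂_le x hx)
  refine le_lam0tilDN hyp hmu fun g x₀ hg => poincare_til hyp hm hH (fun x hx => ?_) hg
  refine le_trans ?_ (hle x hx)
  rw [kap_restrict_Iio]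
  gcongr
  exact kap_monotone (min_le_left _ _)

lemma FI_subset_FII : FIdn D ⊆ FIIdn D := by
  rintro f ⟨hf, hf0, hpos⟩
  refine ⟨hf.1, hf0, fun x hx => ?_⟩
  have h := setLIntegral_deriv_eq hx.1.le hf0 (hf.1.mono (Icc_subset_ccI hx.2.le))
    (fun y hy => hf.2.1 y (Ioo_subset_ooI hx.2.le hy))
    (fun y hy => hpos y (Ioo_subset_ooI hx.2.le hy))
  have hmono : StrictMonoOn f (Icc 0 x) := by
    refine strictMonoOn_of_deriv_pos (convex_Icc _ _) (hf.1.mono (Icc_subset_ccI hx.2.le)) ?_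
    rw [interior_Icc]
    exact fun y hy => hpos y (Ioo_subset_ooI hx.2.le hy)
  rw [← hf0]
  exact hmono ⟨le_rfl, hx.1.le⟩ ⟨hx.1.le, le_rfl⟩ hx.1

lemma kap_eq_density (hyp : Hyp a b D) {g : ℝ → ℝ≥0∞} {x : ℝ} (hx : ENNReal.ofReal x ≤ D) :
    kap (muM a b D) (nuM a b D) g x
      = ∫⁻ s in Ioo 0 x, ENNReal.ofReal (Real.exp (-Cf a b s)) * tailI (muM a b D) g s :=
  setLIntegral_nuM_Ioo hyp hx measurable_tailI

/-- For `f ∈ F_I`, `inf I(f)⁻¹ ≤ inf II(f)⁻¹`: integrate `c e^{-C} ∫_{(s,D)} f dμ ≤ f'(s)` over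
`(0, x)`. -/
lemma iSup_FI_opI_le (hyp : Hyp a b D) :
    (⨆ f ∈ FIdn D, ⨅ x ∈ ooI D, (opIdn a b D f x)⁻¹)
      ≤ ⨆ f ∈ FIdn D, ⨅ x ∈ ooI D, (opIIdn a b D f x)⁻¹ := by
  refine iSup₂_mono fun f hf => ?_
  have hpos := (FI_subset_FII hf).2.2
  obtain ⟨hfc, hf0, hd⟩ := hf
  refine le_iInf₂ fun x hx => ?_
  set c := ⨅ x ∈ ooI D, (opIdn a b D f x)⁻¹ with hc
  rw [opIIdn_eq, le_inv_div_iff (by simpa using hpos x hx) ENNReal.ofReal_ne_top,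
    kap_eq_density hyp hx.2.le, ← setLIntegral_deriv_eq hx.1.le hf0
    (hfc.1.mono (Icc_subset_ccI hx.2.le)) (fun y hy => hfc.2.1 y (Ioo_subset_ooI hx.2.le hy))
    (fun y hy => hd y (Ioo_subset_ooI hx.2.le hy))]
  have := measurable_Cf' hyp
  have := measurable_tailI (μ := muM a b D) (g := fun u => ENNReal.ofReal (f u))
  rw [← lintegral_const_mul _ (by fun_prop)]
  refine setLIntegral_mono' measurableSet_Ioo fun s hs => ?_
  have hs' := Ioo_subset_ooI hx.2.le hs
  have h1 : c ≤ (opIdn a b D f s)⁻¹ := iInf₂_le s hs'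
  rwa [opIdn_eq, le_inv_div_iff (by simpa using hd s hs') ENNReal.ofReal_ne_top] at h1

/-- Members of `F̃_I` are strictly increasing up to `x₀`, hence positive on `(0, x₀]`. -/
lemma FItil_pos {f : ℝ → ℝ} {x₀ : ℝ} (hx₀ : ENNReal.ofReal x₀ < D)
    (hc : ContinuousOn f (ccI D)) (hf0 : f 0 = 0) (hd : ∀ x ∈ Ioo 0 x₀, 0 < deriv f x) {x : ℝ}
    (hx : 0 < x) (hxx : x ≤ x₀) : 0 < f x := by
  have hmono : StrictMonoOn f (Icc 0 x₀) := by
    refine strictMonoOn_of_deriv_pos (convex_Icc _ _) (hc.mono (Icc_subset_ccI hx₀.le)) ?_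
    rwa [interior_Icc]
  rw [← hf0]
  exact hmono ⟨le_rfl, hx.le.trans hxx⟩ ⟨hx.le, hxx⟩ hx

lemma FItil_subset_FIItil : FItildn D ⊆ FIItildn D := by
  rintro f ⟨x₀, h0, hx₀, hc, hf0, ht, hdf, hcd, hd⟩
  exact ⟨x₀, h0, hx₀, hc.mono (Icc_subset_ccI hx₀.le), hf0, ht,
    fun x hx => FItil_pos hx₀ hc hf0 hd hx.1 hx.2.le⟩

/-- The mirror image on `F̃_I`: `sup II(f)⁻¹ ≤ sup I(f)⁻¹`. -/
lemma iInf_FItil_opII_le (hyp : Hyp a b D) (hmu : muM a b D univ ≠ ∞) :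
    (⨅ f ∈ FItildn D, ⨆ x ∈ ooI D, (opIIdn a b D f x)⁻¹)
      ≤ ⨅ f ∈ FItildn D, ⨆ x ∈ ooI D, (opIdn a b D f x)⁻¹ := by
  refine iInf₂_mono fun f hf => ?_
  obtain ⟨x₀, h0, hx₀, hc, hf0, ht, hdf, hcd, hd⟩ := hf
  set c := ⨆ x ∈ ooI D, (opIdn a b D f x)⁻¹ with hcdef
  rcases eq_or_ne c ∞ with hctop | hctop
  · rw [hctop]; exact le_top
  refine iSup₂_le fun x hx => ?_
  have hy := min_mem_ooI h0 hx₀ hx.1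
  set y := min x x₀ with hydef
  have hyx : y ≤ x₀ := min_le_right _ _
  have hfy : 0 < f y := FItil_pos hx₀ hc hf0 hd hy.1 hyx
  have hxy : f x = f y := ht x
  obtain ⟨M, hM⟩ := isCompact_Icc.exists_bound_of_continuousOn (hc.mono (Icc_subset_ccI hx₀.le))
  have hfin : ∫⁻ u, ENNReal.ofReal (f u) ∂(muM a b D) ≠ ∞ := by
    refine lintegral_ne_top_of_bdd hmu (M := ENNReal.ofReal M) ENNReal.ofReal_ne_top fun u hu => ?_
    rw [ht u]
    exact ENNReal.ofReal_le_ofReal ((le_abs_self _).trans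
      (hM _ ⟨le_min hu.1.le h0.le, min_le_right _ _⟩))
  rw [opIIdn_eq]
  refine inv_div_le_of (by rw [hxy]; simpa using hfy) ENNReal.ofReal_ne_top ?_
  rw [hxy]
  refine le_trans ?_ (mul_le_mul_right (kap_monotone (min_le_left x x₀)) c)
  rw [← hydef, kap_eq_density hyp hy.2.le, ← setLIntegral_deriv_eq hy.1.le hf0
    (hc.mono (Icc_subset_ccI hy.2.le)) (fun z hz => hdf z ⟨hz.1, hz.2.trans_le hyx⟩)
    (fun z hz => hd z ⟨hz.1, hz.2.trans_le hyx⟩)]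
  have := measurable_Cf' hyp
  have := measurable_tailI (μ := muM a b D) (g := fun u => ENNReal.ofReal (f u))
  rw [← lintegral_const_mul _ (by fun_prop)]
  refine setLIntegral_mono' measurableSet_Ioo fun s hs => ?_
  have h1 : (opIdn a b D f s)⁻¹ ≤ c :=
    le_iSup₂ (f := fun x (_ : x ∈ ooI D) => (opIdn a b D f x)⁻¹) s (Ioo_subset_ooI hy.2.le hs)
  exact le_mul_of_inv_div_le (ENNReal.mul_ne_top ENNReal.ofReal_ne_top
    (tailI_ne_top_of_lintegral hfin s)) ENNReal.ofReal_ne_top hctop h1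

end Formulas

/-! ### Attaining the supremum -/

section Super

variable {a b : ℝ → ℝ} {D : ℝ≥0∞}

lemma exists_exhaustion (hD : 0 < D) : ∃ x : ℕ → ℝ, Monotone x ∧
    (∀ n, 0 < x n ∧ ENNReal.ofReal (x n) < D) ∧ ∀ u ∈ ooI D, ∃ n, u ≤ x n := by
  obtain ⟨u, hu, hmem, hlim⟩ := exists_seq_strictMono_tendsto' hD
  have htop : ∀ n, u n ≠ ∞ := fun n => ((hmem n).2.trans_le le_top).ne
  refine ⟨fun n => (u n).toReal, fun m n h => ENNReal.toReal_mono (htop n) (hu.monotone h),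
    fun n => ⟨ENNReal.toReal_pos (hmem n).1.ne' (htop n), ?_⟩, fun y hy => ?_⟩
  · rw [ENNReal.ofReal_toReal (htop n)]
    exact (hmem n).2
  · obtain ⟨n, hn⟩ := (hlim.eventually (lt_mem_nhds hy.2)).exists
    refine ⟨n, ?_⟩
    rw [← ENNReal.ofReal_le_iff_le_toReal (htop n)]
    exact hn.le

/-- If the energy inequality `Λ μ((Kg)²) ≤ ∫ (μ(g; (s,D)))² ν(ds)` holds for every source `g`
supported away from `D`, then `F_I` contains functions with `inf I(f)⁻¹` arbitrarily close to
`Λ`: for `c < Λ` the minimal solution `s` of `s = K(1 + c s)` is `μ`-integrable. -/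
lemma le_iSup_FI (hD : 0 < D) (hyp : Hyp a b D) (hmu : muM a b D univ ≠ ∞) {Λ : ℝ≥0∞}
    (hΛ : ∀ g : ℝ → ℝ≥0∞, Measurable g → ∫⁻ u, g u ∂(muM a b D) ≠ ∞ → ∀ x₀ : ℝ, 0 < x₀ →
      ENNReal.ofReal x₀ < D → (∀ u, x₀ < u → g u = 0) →
      Λ * ∫⁻ x, kap (muM a b D) (nuM a b D) g x ^ 2 ∂(muM a b D)
        ≤ ∫⁻ s, tailI (muM a b D) g s ^ 2 ∂(nuM a b D)) :
    Λ ≤ ⨆ f ∈ FIdn D, ⨅ x ∈ ooI D, (opIdn a b D f x)⁻¹ := by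
  refine le_of_forall_lt fun c' hc' => ?_
  obtain ⟨c, hcc', hc⟩ := exists_between hc'
  refine hcc'.trans_le ?_
  have hctop : c ≠ ∞ := hc.ne_top
  obtain ⟨r, hr, hcr⟩ := ENNReal.lt_iff_exists_add_pos_lt.1 hc
  obtain ⟨p, hpm, hp, hcov⟩ := exists_exhaustion hD
  have : IsFiniteMeasure (muM a b D) := ⟨hmu.lt_top⟩
  set μ := muM a b D with hμ
  set ν := nuM a b D with hν
  set E : ℕ → Set ℝ := fun n => Iic (p n) with hE
  have hEm : ∀ n, MeasurableSet (E n) := fun n => measurableSet_Iic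
  have hEmono : Monotone E := fun m n h => Iic_subset_Iic.2 (hpm h)
  set G : ℕ → ℝ → ℝ≥0∞ := fun n => (E n).indicator fun u => 1 + c * iter μ ν c E n u with hG
  have hGm : ∀ n, Measurable (G n) := fun n =>
    (measurable_const.add ((measurable_iter n).const_mul c)).indicator (hEm n)
  have hG0 : ∀ n u, p n < u → G n u = 0 := fun n u hu =>
    indicator_of_notMem (by simpa [hE] using hu) _
  have hGfin : ∀ n, (∃ M, M ≠ ∞ ∧ ∀ x, iter μ ν c E n x ≤ M) → ∫⁻ u, G n u ∂μ ≠ ∞ := by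
    rintro n ⟨M, hM, hle⟩
    refine lintegral_ne_top_of_bdd hmu (M := 1 + c * M) (by finiteness) fun x _ => ?_
    refine (indicator_le_self' (fun _ _ => zero_le) x).trans ?_
    gcongr
    exact hle x
  have hbd : ∀ n, ∃ M, M ≠ ∞ ∧ ∀ x, iter μ ν c E n x ≤ M := by
    intro n
    induction n with
    | zero => exact ⟨0, zero_ne_top, fun x => le_rfl⟩
    | succ n ih =>
      refine ⟨kap μ ν (G n) (p n), kap_ne_top hyp (hGm n) (hGfin n ih) ⟨(hp n).1.le, (hp n).2.le⟩,
        fun x => ?_⟩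
      change kap μ ν (G n) x ≤ _
      rw [kap_eq_trunc (hG0 n)]
      exact kap_monotone (min_le_right _ _)
  have hcovae : ∀ᵐ u ∂μ, ∃ n, u ∈ E n := ae_mem_muM.mono fun u hu => hcov u hu
  have hsum : ∫⁻ x, ⨆ n, iter μ ν c E n x ∂μ ≠ ∞ := by
    refine lintegral_iSup_iter_ne_top ae_pos_nuM (Λ := Λ) (t := (r : ℝ≥0∞) / 2) hctop
      (by simpa using hr.ne') (by finiteness) ?_ hEmono hEm hbd fun n => ?_
    · rw [ENNReal.add_halves]; exact hcr.le
    · exact hΛ (G n) (hGm n) (hGfin n (hbd n)) (p n) (hp n).1 (hp n).2 (hG0 n)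
  set s : ℝ → ℝ≥0∞ := fun x => ⨆ n, iter μ ν c E n x with hs
  have hsm : Measurable s := Measurable.iSup fun n => measurable_iter n
  set φ : ℝ → ℝ≥0∞ := fun u => 1 + c * s u with hφ
  have hφm : Measurable φ := measurable_const.add (hsm.const_mul c)
  have hφfin : ∫⁻ u, φ u ∂μ ≠ ∞ := by
    rw [lintegral_add_left measurable_const, lintegral_const_mul _ hsm, lintegral_const, one_mul]
    exact ENNReal.add_ne_top.2 ⟨hmu, ENNReal.mul_ne_top hctop hsum⟩
  have hsφ : ∀ x, s x = kap μ ν φ x := iSup_iter hEmono hEm hcovae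
  have hsK : ∀ x ∈ ooI D, ENNReal.ofReal (Kr a b D φ x) = s x := fun x hx => by
    rw [ofReal_Kr hyp hφm hφfin (ooI_subset_ccI hx), hsφ]
  have hder : ∀ x ∈ ooI D, ENNReal.ofReal (deriv (Kr a b D φ) x)
      = ENNReal.ofReal (Real.exp (-Cf a b x)) * tailI μ φ x := fun x hx => by
    rw [(hasDerivAt_Kr hyp hφm hφfin hx).deriv, ofReal_dens hφfin]
  have hder0 : ∀ x ∈ ooI D, ENNReal.ofReal (deriv (Kr a b D φ) x) ≠ 0 := by
    intro x hx
    rw [hder x hx]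
    refine mul_ne_zero (by simpa using Real.exp_pos _) ?_
    obtain ⟨t, hxt, ht⟩ := exists_gt_ooI hx.1.le hx.2
    refine tailI_ne_zero hyp hxt
      (fun u hu => ooI_mem_of_le (hx.1.trans hu.1) hu.2.le ht.2) hφm fun u _ => ?_
    simp [hφ]
  have hmem : Kr a b D φ ∈ FIdn D := ⟨C1C_Kr hyp hφm hφfin, Kr_zero, fun x hx => by
    simpa using hder0 x hx⟩
  refine le_trans ?_ (le_iSup₂ (f := fun f (_ : f ∈ FIdn D) => ⨅ x ∈ ooI D, (opIdn a b D f x)⁻¹)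
    _ hmem)
  refine le_iInf₂ fun x hx => ?_
  rw [opIdn_eq, le_inv_div_iff (hder0 x hx) ENNReal.ofReal_ne_top, hder x hx, ← hμ,
    tailI_congr (ae_mem_muM.mono hsK), mul_left_comm, ← tailI_const_mul hctop]
  gcongr
  exact tailI_mono (.of_forall fun u => le_add_self) x

lemma lam0DN_le_iSup (hD : 0 < D) (hyp : Hyp a b D) (hmu : muM a b D univ ≠ ∞) :
    lam0DN a b D ≤ ⨆ f ∈ FIdn D, ⨅ x ∈ ooI D, (opIdn a b D f x)⁻¹ := by
  refine le_iSup_FI hD hyp hmu fun g hg hfin x₀ h0 hx₀ hg0 => ?_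
  rw [← muL2_Kr hyp hg hfin, ← Dform_Kr hyp hg hfin]
  exact lam0DN_mul_le (C1C_Kr hyp hg hfin) Kr_zero

lemma lam0tilDN_le_iSup (hD : 0 < D) (hyp : Hyp a b D) (hmu : muM a b D univ ≠ ∞) :
    lam0tilDN a b D ≤ ⨆ f ∈ FIdn D, ⨅ x ∈ ooI D, (opIdn a b D f x)⁻¹ := by
  refine le_iSup_FI hD hyp hmu fun g hg hfin x₀ h0 hx₀ hg0 => ?_
  have h := lam0tilDN_mul_le (a := a) (b := b) (tilTest_Kt hyp hg hfin h0 hx₀)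
  rw [muL2_Kt hyp hg hfin h0 hx₀, Dform_Kt hyp hg hfin hx₀] at h
  simp only [kap_restrict_Iio, ← kap_eq_trunc hg0] at h
  exact h.trans (lintegral_mono' Measure.restrict_le_self le_rfl)

end Super

/-! ### Upper bounds and attaining the infimum -/

section Upper

variable {a b : ℝ → ℝ} {D : ℝ≥0∞}

lemma lam0tilDN_le_of {f : ℝ → ℝ} {x₀ : ℝ} {c : ℝ≥0∞} (h : TilTest D x₀ f)
    (hne : ¬∀ x ∈ ccI D, f x = 0) (hle : Dform a b D f ≤ c * muL2 a b D f) :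
    lam0tilDN a b D ≤ c :=
  le_trans (sInf_le ⟨f, x₀, h.pos, h.lt, h.zero, h.trunc, h.cont, h.diff, h.contd, hne, rfl⟩)
    (ENNReal.div_le_of_le_mul hle)

lemma lam0DN_le_of {f : ℝ → ℝ} {c : ℝ≥0∞} (h : C1C D f) (h0 : f 0 = 0)
    (hfin : Dform a b D f ≠ ∞) (hne : ¬∀ x ∈ ccI D, f x = 0)
    (hle : Dform a b D f ≤ c * muL2 a b D f) : lam0DN a b D ≤ c :=
  le_trans (sInf_le ⟨f, h, hfin, h0, hne, rfl⟩) (ENNReal.div_le_of_le_mul hle)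

/-- For `f ∈ F̃_II`, the function `(K f)(· ∧ x₀)` is a test function for `λ̃₀` whose Rayleigh
quotient is at most `sup II(f)⁻¹`. -/
lemma lam0tilDN_le_FIItil (hyp : Hyp a b D) (hmu : muM a b D univ ≠ ∞) {f : ℝ → ℝ}
    (hf : f ∈ FIItildn D) : lam0tilDN a b D ≤ ⨆ x ∈ ooI D, (opIIdn a b D f x)⁻¹ := by
  obtain ⟨x₀, h0, hx₀, hc, hf0, ht, hpos⟩ := hf
  have hx₀' : x₀ ∈ ooI D := ⟨h0, hx₀⟩
  set c := ⨆ x ∈ ooI D, (opIIdn a b D f x)⁻¹ with hcdef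
  rcases eq_or_ne c ∞ with hctop | hctop
  · rw [hctop]; exact le_top
  have hcont : ContinuousOn f (ooI D) := by
    have h : ContinuousOn (fun x => f (min x x₀)) (ooI D) :=
      hc.comp (by fun_prop) fun x hx => ⟨le_min hx.1.le h0.le, min_le_right _ _⟩
    exact h.congr fun x _ => ht x
  set φ := (ooI D).indicator fun u => ENNReal.ofReal (f u) with hφ
  have hφm : Measurable φ := measurable_indicator_ofReal hcont
  obtain ⟨M, hM⟩ := isCompact_Icc.exists_bound_of_continuousOn hc
  have hfin : ∫⁻ u, φ u ∂(muM a b D) ≠ ∞ := by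
    refine lintegral_ne_top_of_bdd hmu (M := ENNReal.ofReal M) ENNReal.ofReal_ne_top fun u hu => ?_
    rw [hφ, indicator_of_mem hu, ht u]
    exact ENNReal.ofReal_le_ofReal ((le_abs_self _).trans
      (hM _ ⟨le_min hu.1.le h0.le, min_le_right _ _⟩))
  have hle : ∀ x ∈ ooI D,
      φ x ≤ c * kap (muM a b D) ((nuM a b D).restrict (Iio x₀)) φ x := by
    intro x hx
    have hy := min_mem_ooI h0 hx₀ hx.1
    have h1 : (opIIdn a b D f (min x x₀))⁻¹ ≤ c :=
      le_iSup₂ (f := fun x (_ : x ∈ ooI D) => (opIIdn a b D f x)⁻¹) _ hy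
    rw [opIIdn_eq, ← kap_indicator] at h1
    rw [kap_restrict_Iio, hφ, indicator_of_mem hx, ht x]
    exact le_mul_of_inv_div_le (kap_ne_top hyp hφm hfin (ooI_subset_ccI hy))
      ENNReal.ofReal_ne_top hctop h1
  refine lam0tilDN_le_of (tilTest_Kt hyp hφm hfin h0 hx₀) (fun hz => ?_) ?_
  · have h1 := ofReal_Kt hyp hφm hfin h0 hx₀ h0.le
    rw [hz x₀ (ooI_subset_ccI hx₀'), kap_restrict_Iio, min_self, ENNReal.ofReal_zero] at h1
    refine kap_ne_zero hyp h0 hx₀.le (fun s hs => ?_) h1.symm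
    have hsub : Ioo s x₀ ⊆ ooI D := fun u hu => ooI_mem_of_le (hs.1.trans hu.1) hu.2.le hx₀
    refine tailI_ne_zero hyp hs.2 hsub hφm fun u hu => ?_
    rw [hφ, indicator_of_mem (hsub hu)]
    simpa using hpos u ⟨hs.1.trans hu.1, hu.2⟩
  · rw [Dform_Kt hyp hφm hfin hx₀, muL2_Kt hyp hφm hfin h0 hx₀,
      energy hφm (ae_restrict_of_ae ae_pos_nuM),
      ← lintegral_const_mul _ (measurable_kap.pow_const 2)]
    refine lintegral_mono_ae (ae_mem_muM.mono fun x hx => ?_)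
    rw [sq, ← mul_assoc]
    gcongr
    exact hle x hx

/-- For `f ∈ F̃_II'`, finiteness of `sup II(f)⁻¹` and `K f ∈ L²(μ)` make `K f` itself a test
function for `λ₀`. -/
lemma lam0DN_le_FIItil' (hD : 0 < D) (hyp : Hyp a b D) (hmu : muM a b D univ ≠ ∞) {f : ℝ → ℝ}
    (hf : f ∈ FIItildn' a b D) : lam0DN a b D ≤ ⨆ x ∈ ooI D, (opIIdn a b D f x)⁻¹ := by
  obtain ⟨hc, hpos, hL2⟩ := hf
  set c := ⨆ x ∈ ooI D, (opIIdn a b D f x)⁻¹ with hcdef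
  rcases eq_or_ne c ∞ with hctop | hctop
  · rw [hctop]; exact le_top
  set φ := (ooI D).indicator fun u => ENNReal.ofReal (f u) with hφ
  have hφm : Measurable φ := measurable_indicator_ofReal (hc.mono ooI_subset_ccI)
  have hφpos : ∀ u ∈ ooI D, φ u ≠ 0 := fun u hu => by
    rw [hφ, indicator_of_mem hu]
    simpa using hpos u (ooI_subset_ccI hu)
  have hkap2 : ∫⁻ x, kap (muM a b D) (nuM a b D) φ x ^ 2 ∂(muM a b D) ≠ ∞ := by
    convert hL2 using 1
    refine lintegral_congr_ae (ae_mem_muM.mono fun x hx => ?_)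
    have : ENNReal.ofReal (f x) ≠ 0 := by simpa using hpos x (ooI_subset_ccI hx)
    simp only [opIIdn_eq]
    rw [ENNReal.mul_div_cancel this ENNReal.ofReal_ne_top, hφ, kap_indicator]
  obtain ⟨y, hy⟩ := exists_mem_ooI hD
  have hne : (ae (muM a b D)).NeBot := by
    rw [ae_neBot]
    intro h
    refine measure_Ioo_ne_zero (volume_ac_muM hyp) hy.1
      (fun u hu => ooI_mem_of_le hu.1 hu.2.le hy.2) ?_
    rw [h]; rfl
  obtain ⟨x, hx, hxfin⟩ := (ae_mem_muM.and
    (ae_lt_top (measurable_kap.pow_const 2) hkap2)).exists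
  have hkx : kap (muM a b D) (nuM a b D) φ x ≠ ∞ := by
    intro h
    rw [h] at hxfin
    simp at hxfin
  have htail := tailI_ne_top hyp hx.1 hx.2.le hkx
  obtain ⟨M, hM⟩ := isCompact_Icc.exists_bound_of_continuousOn (hc.mono (Icc_subset_ccI hx.2.le))
  have hfin : ∫⁻ u, φ u ∂(muM a b D) ≠ ∞ := by
    have h1 : ∫⁻ u, (Iic x).indicator φ u ∂(muM a b D) ≠ ∞ := by
      refine lintegral_ne_top_of_bdd hmu (M := ENNReal.ofReal M) ENNReal.ofReal_ne_top
        fun u hu => indicator_apply_le' (fun hux => ?_) fun _ => zero_le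
      rw [hφ, indicator_of_mem hu]
      exact ENNReal.ofReal_le_ofReal ((le_abs_self _).trans (hM _ ⟨hu.1.le, hux⟩))
    rw [lintegral_indicator measurableSet_Iic] at h1
    rw [← lintegral_add_compl _ (measurableSet_Iic (a := x)), compl_Iic]
    exact ENNReal.add_ne_top.2 ⟨h1, htail⟩
  have hle : Dform a b D (Kr a b D φ) ≤ c * muL2 a b D (Kr a b D φ) := by
    rw [Dform_Kr hyp hφm hfin, muL2_Kr hyp hφm hfin, energy hφm ae_pos_nuM,
      ← lintegral_const_mul _ (measurable_kap.pow_const 2)]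
    refine lintegral_mono_ae (ae_mem_muM.mono fun x hx => ?_)
    rw [sq, ← mul_assoc]
    gcongr
    have h1 : (opIIdn a b D f x)⁻¹ ≤ c :=
      le_iSup₂ (f := fun x (_ : x ∈ ooI D) => (opIIdn a b D f x)⁻¹) _ hx
    rw [opIIdn_eq, ← kap_indicator] at h1
    have h2 := le_mul_of_inv_div_le (kap_ne_top hyp hφm hfin (ooI_subset_ccI hx))
      ENNReal.ofReal_ne_top hctop h1
    rwa [hφ, indicator_of_mem hx]
  refine lam0DN_le_of (C1C_Kr hyp hφm hfin) Kr_zero (ne_top_of_le_ne_top ?_ hle) (fun hz => ?_) hle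
  · rw [muL2_Kr hyp hφm hfin]
    exact ENNReal.mul_ne_top hctop hkap2
  · have h1 := ofReal_Kr hyp hφm hfin (ooI_subset_ccI hx)
    rw [hz x (ooI_subset_ccI hx), ENNReal.ofReal_zero] at h1
    refine kap_ne_zero hyp hx.1 hx.2.le (fun s hs => ?_) h1.symm
    have hsub : Ioo s x ⊆ ooI D := fun u hu => ooI_mem_of_le (hs.1.trans hu.1) hu.2.le hx.2
    exact tailI_ne_zero hyp hs.2 hsub hφm fun u hu => hφpos u (hsub hu)

/-- Near-optimal members of `F̃_I`. If `λ̃₀ < c`, some `x₀` carries a test function with Rayleigh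
quotient below `c`. With `K` built from `ν` cut off at `x₀`, the Picard iterates of `s = K(1 + c s)`
then blow up at `x₀`, since a finite limit would be a supersolution and force `c` to be a lower
bound for the Rayleigh quotients of functions frozen beyond `x₀`. As soon as an iterate is large at
`x₀`, the constant `1` is negligible and it satisfies `sup I⁻¹ ≤ c'`, for any prescribed
`c' > c`. -/
lemma iInf_FItil_opI_le (hyp : Hyp a b D) (hmu : muM a b D univ ≠ ∞) :
    (⨅ f ∈ FItildn D, ⨆ x ∈ ooI D, (opIdn a b D f x)⁻¹) ≤ lam0tilDN a b D := by
  refine le_of_forall_gt fun c'' hc'' => ?_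
  obtain ⟨c', hc', hcc''⟩ := exists_between hc''
  obtain ⟨c, hc, hcc'⟩ := exists_between hc'
  refine lt_of_le_of_lt ?_ hcc''
  have hctop : c ≠ ∞ := hcc'.ne_top
  have hc'top : c' ≠ ∞ := hcc''.ne_top
  obtain ⟨_, ⟨f, x₀, h0, hx₀, hf0, ht, hfc, hfd, hfcd, hfne, rfl⟩, hlt⟩ := sInf_lt_iff.1 hc
  have hf : TilTest D x₀ f := ⟨h0, hx₀, hf0, ht, hfc, hfd, hfcd⟩
  have hx₀' : x₀ ∈ ooI D := ⟨h0, hx₀⟩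
  have hDne : Dform a b D f ≠ 0 := Dform_ne_zero hyp (fun x hx => hf.abs_le' hyp hx) hfne
  have hmune : muL2 a b D f ≠ ∞ := hf.muL2_ne_top hmu
  have hlt' : Dform a b D f < c * muL2 a b D f := by
    rwa [ENNReal.div_lt_iff (Or.inr hDne) (Or.inl hmune)] at hlt
  set μ := muM a b D with hμ
  set ν := (nuM a b D).restrict (Iio x₀) with hν
  set E : ℕ → Set ℝ := fun _ => univ with hE
  set G : ℕ → ℝ → ℝ≥0∞ := fun n => (E n).indicator fun u => 1 + c * iter μ ν c E n u with hG
  have hGu : ∀ n u, G n u = 1 + c * iter μ ν c E n u := fun n u => by simp [hG, hE]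
  have hEmono : Monotone E := monotone_const
  have hEm : ∀ n, MeasurableSet (E n) := fun n => MeasurableSet.univ
  have hGm : ∀ n, Measurable (G n) := fun n =>
    (measurable_const.add ((measurable_iter n).const_mul c)).indicator (hEm n)
  have hsat : ∀ n x, iter μ ν c E n x ≤ iter μ ν c E n x₀ := by
    intro n x
    cases n with
    | zero => exact le_rfl
    | succ n =>
      change kap μ ν (G n) x ≤ kap μ ν (G n) x₀
      rw [hν, kap_restrict_Iio, kap_restrict_Iio, min_self]
      exact kap_monotone (min_le_right _ _)
  have hGfin' : ∀ n, iter μ ν c E n x₀ ≠ ∞ → ∫⁻ u, G n u ∂μ ≠ ∞ := by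
    intro n hn
    refine lintegral_ne_top_of_bdd hmu (M := 1 + c * iter μ ν c E n x₀) (by finiteness)
      fun x _ => ?_
    rw [hGu]
    gcongr
    exact hsat n x
  have hfinx : ∀ n, iter μ ν c E n x₀ ≠ ∞ := by
    intro n
    induction n with
    | zero => exact zero_ne_top
    | succ n ih =>
      change kap μ ν (G n) x₀ ≠ ∞
      rw [hν, kap_restrict_Iio, min_self]
      exact kap_ne_top hyp (hGm n) (hGfin' n ih) (ooI_subset_ccI hx₀')
  have hGfin := fun n => hGfin' n (hfinx n)
  have hsup : ⨆ n, iter μ ν c E n x₀ = ∞ := by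
    by_contra hS
    set s : ℝ → ℝ≥0∞ := fun x => ⨆ n, iter μ ν c E n x with hs
    have hsm : Measurable s := Measurable.iSup fun n => measurable_iter n
    have hφm : Measurable fun u => 1 + c * s u := measurable_const.add (hsm.const_mul c)
    have hφfin : ∫⁻ u, (1 + c * s u) ∂μ ≠ ∞ := by
      refine lintegral_ne_top_of_bdd hmu (M := 1 + c * s x₀) (by finiteness) fun x _ => ?_
      gcongr
      exact iSup_mono fun n => hsat n x
    refine absurd hlt' (not_lt.2 (poincare_til hyp hφm (fun t htD => ⟨?_, ?_⟩) (fun x hx => ?_) hf))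
    · obtain ⟨y, hty, hy⟩ := exists_gt_ooI htD.1.le htD.2
      exact tailI_ne_zero hyp hty
        (fun u hu => ooI_mem_of_le (htD.1.trans hu.1) hu.2.le hy.2) hφm fun u _ => by simp
    · exact tailI_ne_top_of_lintegral hφfin t
    · rw [← iSup_iter hEmono hEm (.of_forall fun u => ⟨0, mem_univ u⟩)]
      exact le_add_self
  have hIoi : μ (Ioi x₀) ≠ 0 := by
    obtain ⟨y, hxy, hy⟩ := exists_gt_ooI h0.le hx₀
    refine fun h => measure_Ioo_ne_zero (volume_ac_muM hyp) hxy
      (fun u hu => ooI_mem_of_le (h0.trans hu.1) hu.2.le hy.2) ?_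
    exact measure_mono_null Ioo_subset_Ioi_self h
  -- choose `n` so that the iterate absorbs the constant `1` into the gap `c' - c`
  obtain ⟨n, hn⟩ : ∃ n, μ univ ≤ (c' - c) * (iter μ ν c E (n + 1) x₀ * μ (Ioi x₀)) := by
    have hIoit : μ (Ioi x₀) ≠ ∞ := measure_ne_top_of_subset (subset_univ _) hmu
    have hcc0 : c' - c ≠ 0 := (tsub_pos_of_lt hcc').ne'
    have hcct : c' - c ≠ ∞ := by finiteness
    have hlt : μ univ / ((c' - c) * μ (Ioi x₀)) < ⨆ n, iter μ ν c E n x₀ := by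
      rw [hsup]
      exact ENNReal.div_lt_top hmu (mul_ne_zero hcc0 hIoi)
    obtain ⟨n, hn⟩ := lt_iSup_iff.1 hlt
    refine ⟨n, ?_⟩
    have h2 := hn.le.trans (iter_le_succ hEmono n x₀)
    rw [ENNReal.div_le_iff (mul_ne_zero hcc0 hIoi) (by finiteness)] at h2
    calc _ ≤ _ := h2
      _ = _ := by ring
  have hKt := tilTest_Kt hyp (hGm n) (hGfin n) h0 hx₀
  have hder : ∀ x ∈ Ioo 0 x₀, ENNReal.ofReal (deriv (Kt a b D (G n) x₀) x)
      = ENNReal.ofReal (Real.exp (-Cf a b x)) * tailI μ (G n) x := fun x hx => by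
    rw [(hasDerivAt_Kt hyp (hGm n) (hGfin n) hx₀ hx).deriv, ofReal_dens (hGfin n)]
  have hder0 : ∀ x ∈ Ioo 0 x₀, ENNReal.ofReal (deriv (Kt a b D (G n) x₀) x) ≠ 0 := by
    intro x hx
    rw [hder x hx]
    refine mul_ne_zero (by simpa using Real.exp_pos _) ?_
    refine tailI_ne_zero hyp hx.2
      (fun u hu => ooI_mem_of_le (hx.1.trans hu.1) hu.2.le hx₀) (hGm n) fun u _ => ?_
    simp [hGu]
  have hKiter : ∀ x, 0 < x → ENNReal.ofReal (Kt a b D (G n) x₀ x) = iter μ ν c E (n + 1) x :=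
    fun x hx => ofReal_Kt hyp (hGm n) (hGfin n) h0 hx₀ hx.le
  have htailK : ∀ x, tailI μ (fun u => ENNReal.ofReal (Kt a b D (G n) x₀ u)) x
      = tailI μ (iter μ ν c E (n + 1)) x := fun x =>
    congrFun (tailI_congr (ae_mem_muM.mono fun u hu => hKiter u hu.1)) x
  have hbig : ∀ x ≤ x₀, iter μ ν c E (n + 1) x₀ * μ (Ioi x₀)
      ≤ tailI μ (iter μ ν c E (n + 1)) x := by
    intro x hx
    refine le_trans ?_ (tailI_antitone hx)
    rw [← setLIntegral_const]
    exact setLIntegral_mono' measurableSet_Ioi fun u hu => iter_monotone _ (le_of_lt hu)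
  have hmem : Kt a b D (G n) x₀ ∈ FItildn D :=
    ⟨x₀, h0, hx₀, continuousOn_Kt hyp (hGm n) (hGfin n) h0 hx₀, hKt.zero, hKt.trunc, hKt.diff,
      hKt.contd, fun x hx => by simpa using hder0 x hx⟩
  refine (iInf₂_le _ hmem).trans (iSup₂_le fun x hx => ?_)
  rcases lt_or_ge x x₀ with hxx | hxx
  · rw [opIdn_eq]
    refine inv_div_le_of (hder0 x ⟨hx.1, hxx⟩) ENNReal.ofReal_ne_top ?_
    rw [hder x ⟨hx.1, hxx⟩, ← hμ, htailK, mul_left_comm]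
    gcongr
    calc tailI μ (G n) x ≤ tailI μ (fun u => 1 + c * iter μ ν c E (n + 1) u) x :=
          tailI_mono (.of_forall fun u => by
            rw [hGu]; gcongr; exact iter_le_succ hEmono n u) x
      _ = μ (Ioi x) + c * tailI μ (iter μ ν c E (n + 1)) x := by
          rw [← tailI_const_mul hctop]
          unfold tailI
          rw [lintegral_add_left measurable_const, setLIntegral_const, one_mul]
      _ ≤ (c' - c) * tailI μ (iter μ ν c E (n + 1)) x
            + c * tailI μ (iter μ ν c E (n + 1)) x := by
          gcongr
          refine (measure_mono (subset_univ _)).trans (hn.trans ?_)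
          gcongr
          exact hbig x hxx.le
      _ = c' * tailI μ (iter μ ν c E (n + 1)) x := by
          rw [← add_mul, tsub_add_cancel_of_le hcc'.le]
  -- beyond `x₀` the derivative is `0` and `I = ∞`, so `I⁻¹ = 0`
  · rw [opIdn_eq, deriv_trunc hKt.trunc hxx, ENNReal.ofReal_zero, ENNReal.div_zero,
      ENNReal.inv_top]
    · exact zero_le
    refine mul_ne_zero (by simpa using Real.exp_pos _) ?_
    obtain ⟨y, hxy, hy⟩ := exists_gt_ooI hx.1.le hx.2
    rw [← hμ, htailK]
    refine tailI_ne_zero hyp hxy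
      (fun u hu => ooI_mem_of_le (hx.1.trans hu.1) hu.2.le hy.2) (measurable_iter _) fun u hu => ?_
    have hxu : x₀ ≤ u := hxx.trans hu.1.le
    refine ne_of_gt (lt_of_lt_of_le ?_ (iter_monotone (n + 1) hxu))
    refine pos_iff_ne_zero.2 fun h => ?_
    rw [h, zero_mul, mul_zero] at hn
    exact hIoi (measure_mono_null (subset_univ _) (le_antisymm hn zero_le))

end Upper

/-! ### The variational formulas -/

/-- Theorem 4.1: variational formulas for the DN principal eigenvalue when
`μ(0,D) < ∞`. -/
theorem dn_variational_formulas
    (a b : ℝ → ℝ) (D : ℝ≥0∞) (hD : 0 < D) (hyp : Hyp a b D)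
    (hmu : muM a b D Set.univ ≠ ∞) :
    lam0DN a b D = lam0tilDN a b D ∧
    (⨅ f ∈ FItildn D, ⨆ x ∈ ooI D, (opIdn a b D f x)⁻¹) = lam0DN a b D ∧
    (⨆ f ∈ FIdn D, ⨅ x ∈ ooI D, (opIdn a b D f x)⁻¹) = lam0DN a b D ∧
    (⨅ f ∈ FItildn D, ⨆ x ∈ ooI D, (opIIdn a b D f x)⁻¹) = lam0DN a b D ∧
    (⨅ f ∈ FIItildn D, ⨆ x ∈ ooI D, (opIIdn a b D f x)⁻¹) = lam0DN a b D ∧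
    (⨅ f ∈ FIItildn D ∪ FIItildn' a b D,
        ⨆ x ∈ ooI D, (opIIdn a b D f x)⁻¹) = lam0DN a b D ∧
    (⨆ f ∈ FIdn D, ⨅ x ∈ ooI D, (opIIdn a b D f x)⁻¹) = lam0DN a b D ∧
    (⨆ f ∈ FIIdn D, ⨅ x ∈ ooI D, (opIIdn a b D f x)⁻¹) = lam0DN a b D := by
  -- `λ₀`, `λ̃₀ ≤ sup_{F_I} inf I⁻¹ ≤ sup_{F_I} inf II⁻¹ ≤ sup_{F_II} inf II⁻¹ ≤ λ₀`, `λ̃₀`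
  have hI_II := iSup_FI_opI_le hyp
  have hII_II : (⨆ f ∈ FIdn D, ⨅ x ∈ ooI D, (opIIdn a b D f x)⁻¹)
      ≤ ⨆ f ∈ FIIdn D, ⨅ x ∈ ooI D, (opIIdn a b D f x)⁻¹ := biSup_mono FI_subset_FII
  have hII := iSup_FII_le_lam0DN hyp
  have hDN := lam0DN_le_iSup hD hyp hmu
  have heq : lam0DN a b D = lam0tilDN a b D :=
    le_antisymm (hDN.trans (hI_II.trans (hII_II.trans (iSup_FII_le_lam0tilDN hyp hmu))))
      ((lam0tilDN_le_iSup hD hyp hmu).trans (hI_II.trans (hII_II.trans hII)))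
  -- `λ₀ ≤ inf_∪ sup II⁻¹ ≤ inf_{F̃_II} sup II⁻¹ ≤ inf_{F̃_I} sup II⁻¹ ≤ inf_{F̃_I} sup I⁻¹ ≤ λ̃₀`
  have hU4 := iInf_FItil_opI_le hyp hmu
  rw [← heq] at hU4
  have hT_I := iInf_FItil_opII_le hyp hmu
  have hTT : (⨅ f ∈ FIItildn D, ⨆ x ∈ ooI D, (opIIdn a b D f x)⁻¹)
      ≤ ⨅ f ∈ FItildn D, ⨆ x ∈ ooI D, (opIIdn a b D f x)⁻¹ := biInf_mono FItil_subset_FIItil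
  have hUT : (⨅ f ∈ FIItildn D ∪ FIItildn' a b D, ⨆ x ∈ ooI D, (opIIdn a b D f x)⁻¹)
      ≤ ⨅ f ∈ FIItildn D, ⨆ x ∈ ooI D, (opIIdn a b D f x)⁻¹ := biInf_mono subset_union_left
  have hU : lam0DN a b D
      ≤ ⨅ f ∈ FIItildn D ∪ FIItildn' a b D, ⨆ x ∈ ooI D, (opIIdn a b D f x)⁻¹ := by
    refine le_iInf₂ fun f hf => ?_
    rcases hf with hf | hf
    · rw [heq]
      exact lam0tilDN_le_FIItil hyp hmu hf
    · exact lam0DN_le_FIItil' hD hyp hmu hf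
  refine ⟨heq, ?_, ?_, ?_, ?_, ?_, ?_, ?_⟩
  · exact le_antisymm hU4 (hU.trans (hUT.trans (hTT.trans hT_I)))
  · exact le_antisymm (hI_II.trans (hII_II.trans hII)) hDN
  · exact le_antisymm (hT_I.trans hU4) (hU.trans (hUT.trans hTT))
  · exact le_antisymm (hTT.trans (hT_I.trans hU4)) (hU.trans hUT)
  · exact le_antisymm (hUT.trans (hTT.trans (hT_I.trans hU4))) hU
  · exact le_antisymm (hII_II.trans hII) (hDN.trans hI_II)
  · exact le_antisymm hII (hDN.trans (hI_II.trans hII_II))
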